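/- arXiv:1804.01325 — 11 statements merged into one kernel-verified Lean document; each statement's English description precedes it below -/
import Mathlib

section
/- Let A be an n×n real positive semidefinite matrix and let A† be its Moore-Penrose inverse. If S ⊆ {1,…,n} is a subset such that the principal submatrix A[S,S] is nonsingular, then the principal submatrix A†[S,S] is also nonsingular. -/
open Matrix

/-- If `A` is a real positive semidefinite matrix with Moore-Penrose inverse `Adag`,
and the principal submatrix `A[S,S]` is nonsingular, then `Adag[S,S]` is nonsingular. -/
theorem psd_mp_principal_submatrix_nonsingular
    (N : ℕ) (A Adag : Matrix (Fin N) (Fin N) ℝ)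
    (hA : A.PosSemidef)
    (h1 : A * Adag * A = A) (h2 : Adag * A * Adag = Adag)
    (h3 : (A * Adag)ᵀ = A * Adag) (h4 : (Adag * A)ᵀ = Adag * A)
    (S : Finset (Fin N))
    (hS : IsUnit (A.submatrix (fun i : S => (i : Fin N)) (fun i : S => (i : Fin N))).det) :
    IsUnit (Adag.submatrix (fun i : S => (i : Fin N)) (fun i : S => (i : Fin N))).det := by
  have hAt : Aᵀ = A := by
    have := hA.isHermitian
    rwa [IsHermitian, conjTranspose_eq_transpose_of_trivial] at this
  have e3 : Adagᵀ * A = A * Adag := by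
    rw [← h3, transpose_mul, hAt]
  have e4 : A * Adagᵀ = Adag * A := by
    rw [← h4, transpose_mul, hAt]
  have t1 : A * Adagᵀ * A = A := by
    have := congrArg transpose h1
    simpa only [transpose_mul, hAt, Matrix.mul_assoc] using this
  have a1 : (A * Adag) * (Adag * A) = Adag * A := by
    rw [← e4, ← Matrix.mul_assoc, h1]
  have a2 : (Adag * A) * (A * Adag) = A * Adag := by
    rw [← e4, ← Matrix.mul_assoc, t1]
  have comm : A * Adag = Adag * A := by
    have := congrArg transpose a1
    rw [transpose_mul, h3, h4, a2] at this
    exact this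
  have hBt : Adagᵀ = Adag := by
    have h := congrArg transpose h2
    rw [transpose_mul, transpose_mul, hAt, ← Matrix.mul_assoc, e3, comm, Matrix.mul_assoc, e4,
      ← comm, ← Matrix.mul_assoc, h2] at h
    exact h.symm
  let W : Matrix (Fin N) S ℝ := (1 : Matrix (Fin N) (Fin N) ℝ).submatrix id (fun i : S => (i : Fin N))
  have hsub : ∀ M : Matrix (Fin N) (Fin N) ℝ,
      M.submatrix (fun i : S => (i : Fin N)) (fun i : S => (i : Fin N)) = Wᵀ * (M * W) := by
    intro M
    ext i j
    simp [W, Matrix.mul_apply, Matrix.one_apply]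
  rw [hsub] at hS ⊢
  rw [isUnit_iff_ne_zero] at hS ⊢
  intro h0
  apply hS
  obtain ⟨v, hv, hv0⟩ := exists_mulVec_eq_zero_iff.mpr h0
  refine exists_mulVec_eq_zero_iff.mp ⟨v, hv, ?_⟩
  simp only [← mulVec_mulVec] at hv0 ⊢
  set x := W *ᵥ v with hx
  have q : x ⬝ᵥ (Adag *ᵥ x) = 0 := by
    have : v ⬝ᵥ (Wᵀ *ᵥ (Adag *ᵥ x)) = 0 := by rw [hv0, dotProduct_zero]
    rwa [dotProduct_mulVec, vecMul_transpose] at this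
  have q2 : (Adag *ᵥ x) ⬝ᵥ (A *ᵥ (Adag *ᵥ x)) = 0 := by
    have e : Adag *ᵥ x = Adagᵀ *ᵥ x := by rw [hBt]
    nth_rewrite 1 [e]
    rw [mulVec_transpose, ← dotProduct_mulVec, mulVec_mulVec, mulVec_mulVec, h2]
    exact q
  have q3 : A *ᵥ (Adag *ᵥ x) = 0 :=
    (hA.dotProduct_mulVec_zero_iff _).mp (by simpa using q2)
  have q4 : A *ᵥ x = 0 := by
    rw [← h1, Matrix.mul_assoc, ← comm, ← mulVec_mulVec, ← mulVec_mulVec, q3, mulVec_zero]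
  rw [q4, mulVec_zero]
end

section
/- Let A be an ns×ns real matrix partitioned into n² blocks A_{i,j} (1 ≤ i,j ≤ n), each of size s×s, where the block A_{i,j} occupies rows (i−1)s+1,…,is and columns (j−1)s+1,…,js. If Σ_{j=1}^n A_{i,j} = 0 for every i and Σ_{i=1}^n A_{i,j} = 0 for every j, then the cofactors of any two blocks of A are equal; that is, for all i, j, k, l in {1,…,n}, the cofactor of A_{i,j} equals the cofactor of A_{k,l}. -/
open Matrix Finset

noncomputable section

/-- The cofactor of the `(i,j)`-th `s × s` block of an `(n+1)s × (n+1)s` matrix `A`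
(blocks indexed by `Fin (n+1) × Fin s`): the sign `(-1)^σ`, where `σ` is the sum of the
(1-based) indices of the deleted rows and columns, times the determinant of the matrix
obtained from `A` by deleting the `i`-th block row and the `j`-th block column
(realised via `Fin.succAbove`).  Here the 1-based deleted row indices are
`i*s + 1, …, i*s + s` (for `i : Fin (n+1)`, 0-based), so
`σ = s^2*(i + j) + s*(s+1)`. -/
def blockCofactor {n s : ℕ} (A : Matrix (Fin (n + 1) × Fin s) (Fin (n + 1) × Fin s) ℝ)
    (i j : Fin (n + 1)) : ℝ :=
  (-1 : ℝ) ^ (s ^ 2 * ((i : ℕ) + (j : ℕ)) + s * (s + 1)) *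
    (A.submatrix
      (fun p : Fin n × Fin s => (i.succAbove p.1, p.2))
      (fun p : Fin n × Fin s => (j.succAbove p.1, p.2))).det

lemma bc_step {n s : ℕ} (A : Matrix (Fin (n + 1) × Fin s) (Fin (n + 1) × Fin s) ℝ)
    (hrow : ∀ (i : Fin (n + 1)) (a b : Fin s), ∑ j : Fin (n + 1), A (i, a) (j, b) = 0)
    (i : Fin (n + 1)) (k : Fin n) :
    blockCofactor A i k.succ = blockCofactor A i k.castSucc := by
  have key : A.submatrix
      (fun p : Fin n × Fin s => (i.succAbove p.1, p.2))
      (fun p : Fin n × Fin s => (k.castSucc.succAbove p.1, p.2)) =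
      A.submatrix
      (fun p : Fin n × Fin s => (i.succAbove p.1, p.2))
      (fun p : Fin n × Fin s => (k.succ.succAbove p.1, p.2)) *
      (Matrix.kroneckerMap (· * ·) ((1 : Matrix (Fin n) (Fin n) ℝ).updateCol k (fun _ => -1))
        (1 : Matrix (Fin s) (Fin s) ℝ)) := by
    ext ⟨p, a⟩ ⟨q, b⟩
    simp only [Matrix.mul_apply, Fintype.sum_prod_type, Matrix.submatrix_apply,
      Matrix.kroneckerMap_apply, Matrix.one_apply (n := Fin s), mul_ite, mul_one, mul_zero,
      Finset.sum_ite_eq', Finset.mem_univ, if_true]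
    by_cases hq : q = k
    · subst hq
      have h := hrow (i.succAbove p) a b
      rw [Fin.sum_univ_succAbove _ q.succ] at h
      simp only [Matrix.updateCol_self, mul_neg, mul_one, Finset.sum_neg_distrib,
        Fin.succAbove_castSucc_self]
      linarith
    · simp only [Matrix.updateCol_ne hq, Matrix.one_apply, mul_ite, mul_one, mul_zero,
        Finset.sum_ite_eq', Finset.mem_univ, if_true]
      congr 2
      rcases lt_or_gt_of_ne hq with h | h
      · rw [Fin.succAbove_castSucc_of_lt _ _ h, Fin.succAbove_succ_of_le _ _ h.le]
      · rw [Fin.succAbove_castSucc_of_le _ _ h.le, Fin.succAbove_succ_of_lt _ _ h]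
  have hdet : ((1 : Matrix (Fin n) (Fin n) ℝ).updateCol k (fun _ => -1)).det = -1 := by
    rw [← Matrix.cramer_apply, Matrix.cramer_one]
    rfl
  unfold blockCofactor
  rw [key, Matrix.det_mul, Matrix.det_kronecker, hdet]
  simp only [Matrix.det_one, one_pow, mul_one, Fintype.card_fin, Fin.val_succ, Fin.val_castSucc]
  have e : (-1 : ℝ) ^ (s ^ 2) = (-1) ^ s := by
    rcases Nat.even_or_odd s with h | h
    · rw [h.neg_one_pow, (h.pow_of_ne_zero two_ne_zero).neg_one_pow]
    · rw [h.neg_one_pow, h.pow.neg_one_pow]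
  rw [show s ^ 2 * ((i : ℕ) + (k + 1)) + s * (s + 1)
    = (s ^ 2 * (i + k) + s * (s + 1)) + s ^ 2 by ring, pow_add _ _ (s ^ 2), e]
  ring

lemma bc_zero {n s : ℕ} (A : Matrix (Fin (n + 1) × Fin s) (Fin (n + 1) × Fin s) ℝ)
    (hrow : ∀ (i : Fin (n + 1)) (a b : Fin s), ∑ j : Fin (n + 1), A (i, a) (j, b) = 0)
    (i j : Fin (n + 1)) : blockCofactor A i j = blockCofactor A i 0 := by
  induction j using Fin.induction with
  | zero => rfl
  | succ k ih => rw [bc_step A hrow, ih]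

lemma bc_transpose {n s : ℕ} (A : Matrix (Fin (n + 1) × Fin s) (Fin (n + 1) × Fin s) ℝ)
    (i j : Fin (n + 1)) : blockCofactor Aᵀ j i = blockCofactor A i j := by
  unfold blockCofactor
  rw [← Matrix.transpose_submatrix, Matrix.det_transpose, add_comm (j : ℕ)]

/-- If all block-row sums and all block-column sums of a block matrix `A` vanish,
then the cofactors of any two blocks of `A` are equal. -/
theorem blockCofactor_eq_of_blockRowSums_eq_zero
    (n s : ℕ) (A : Matrix (Fin (n + 1) × Fin s) (Fin (n + 1) × Fin s) ℝ)
    (hrow : ∀ (i : Fin (n + 1)) (a b : Fin s), ∑ j : Fin (n + 1), A (i, a) (j, b) = 0)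
    (hcol : ∀ (j : Fin (n + 1)) (a b : Fin s), ∑ i : Fin (n + 1), A (i, a) (j, b) = 0) :
    ∀ i j k l : Fin (n + 1), blockCofactor A i j = blockCofactor A k l := by
  have main : ∀ i j, blockCofactor A i j = blockCofactor A 0 0 := by
    intro i j
    rw [bc_zero A hrow, ← bc_transpose, bc_zero Aᵀ (fun j a b => hcol j b a), bc_transpose]
  intro i j k l
  rw [main i j, main k l]
end
end

section
/- For each i = 1,…,n, the s×s matrix X_{ii} − (1/n) I_s is positive definite. -/
open Matrix Finset
open scoped Kronecker

noncomputable section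

/-- The `ns × s` matrix `1 ⊗ Iₛ`, where `1` is the all-ones column vector. -/
def oneKron (n s : ℕ) : Matrix (Fin n × Fin s) (Fin s) ℝ :=
  Matrix.of fun p b => if p.2 = b then 1 else 0

/-- The `ns × ns` matrix `J ⊗ Iₛ`, where `J` is the all-ones matrix. -/
def JKron (n s : ℕ) : Matrix (Fin n × Fin s) (Fin n × Fin s) ℝ :=
  (Matrix.of fun _ _ : Fin n => (1 : ℝ)) ⊗ₖ (1 : Matrix (Fin s) (Fin s) ℝ)

/-- The Laplacian matrix of a graph whose edges `{i,j}` are weighted by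
positive definite `s × s` matrices `W i j`: the `(i,i)` block is
`Σ_{j ∼ i} (W i j)⁻¹`, the `(i,j)` block for `i ≠ j` is `-(W i j)⁻¹` if `i ∼ j`
and `0` otherwise. -/
def lap {n s : ℕ} (G : SimpleGraph (Fin n)) [DecidableRel G.Adj]
    (W : Fin n → Fin n → Matrix (Fin s) (Fin s) ℝ) :
    Matrix (Fin n × Fin s) (Fin n × Fin s) ℝ :=
  Matrix.of fun p q =>
    if p.1 = q.1 then (∑ k ∈ univ.filter (fun k => G.Adj p.1 k), (W p.1 k)⁻¹) p.2 q.2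
    else if G.Adj p.1 q.1 then -((W p.1 q.1)⁻¹ p.2 q.2) else 0

/-- The four Penrose conditions: `Adag` is a Moore–Penrose inverse of `A`. -/
def IsMoorePenrose {m : Type*} [Fintype m] (A Adag : Matrix m m ℝ) : Prop :=
  A * Adag * A = A ∧ Adag * A * Adag = Adag ∧ (A * Adag)ᵀ = A * Adag ∧ (Adag * A)ᵀ = Adag * A

/-- The `s × s` block of an `ns × ns` matrix in block position `(i, j)`. -/
def blk {n s : ℕ} (A : Matrix (Fin n × Fin s) (Fin n × Fin s) ℝ) (i j : Fin n) :
    Matrix (Fin s) (Fin s) ℝ :=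
  Matrix.of fun a b => A (i, a) (j, b)

/-- The resistance matrix built from a Moore–Penrose inverse `Ldag` of the Laplacian:
its `(i,j)` block is `K_{ii} + K_{jj} - 2 K_{ij}`, where `K_{ij}` are the blocks of `Ldag`. -/
def resist {n s : ℕ} (Ldag : Matrix (Fin n × Fin s) (Fin n × Fin s) ℝ) :
    Matrix (Fin n × Fin s) (Fin n × Fin s) ℝ :=
  Matrix.of fun p q =>
    Ldag (p.1, p.2) (p.1, q.2) + Ldag (q.1, p.2) (q.1, q.2) - 2 * Ldag p q

/-- The `ns × s` matrix `τ`, whose `i`-th block is `2 Iₛ - Σ_{j ∼ i} (W i j)⁻¹ R_{ji}`. -/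
def tauMat {n s : ℕ} (G : SimpleGraph (Fin n)) [DecidableRel G.Adj]
    (W : Fin n → Fin n → Matrix (Fin s) (Fin s) ℝ)
    (R : Matrix (Fin n × Fin s) (Fin n × Fin s) ℝ) :
    Matrix (Fin n × Fin s) (Fin s) ℝ :=
  Matrix.of fun p b =>
    ((2 : ℝ) • (1 : Matrix (Fin s) (Fin s) ℝ) -
      ∑ j ∈ univ.filter (fun j => G.Adj p.1 j), (W p.1 j)⁻¹ * blk R j p.1) p.2 b

/-- The block diagonal matrix `X̄` with the same diagonal blocks as `X`. -/
def bdiag {n s : ℕ} (X : Matrix (Fin n × Fin s) (Fin n × Fin s) ℝ) :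
    Matrix (Fin n × Fin s) (Fin n × Fin s) ℝ :=
  Matrix.of fun p q => if p.1 = q.1 then X (p.1, p.2) (p.1, q.2) else 0

/-- Each diagonal block satisfies: `X_{ii} - (1/n) Iₛ` is positive definite. -/
theorem diagBlock_sub_posDef
    (n s : ℕ) (hn : 2 ≤ n) (hs : 1 ≤ s)
    (G : SimpleGraph (Fin n)) [DecidableRel G.Adj] (hconn : G.Connected)
    (W : Fin n → Fin n → Matrix (Fin s) (Fin s) ℝ)
    (hWsymm : ∀ i j, W i j = W j i)
    (hWpd : ∀ i j, G.Adj i j → (W i j).PosDef)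
    (hPSD : (lap G W).PosSemidef)
    (hrank : (lap G W).rank = n * s - s)
    (hker : ∀ v : Fin n × Fin s → ℝ,
      lap G W *ᵥ v = 0 ↔ ∃ c : Fin s → ℝ, v = oneKron n s *ᵥ c)
    (X : Matrix (Fin n × Fin s) (Fin n × Fin s) ℝ)
    (hX : X = (lap G W + ((n : ℝ)⁻¹) • JKron n s)⁻¹) :
    ∀ i : Fin n, (blk X i i - ((n : ℝ)⁻¹) • (1 : Matrix (Fin s) (Fin s) ℝ)).PosDef := by
  classical
  intro i
  have hn0 : (n : ℝ) ≠ 0 := by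
    have : n ≠ 0 := by omega
    exact_mod_cast this
  set L := lap G W with hL
  set O := oneKron n s with hO
  set P := ((n : ℝ)⁻¹) • JKron n s with hP
  have hJ : JKron n s = O * Oᵀ := by
    ext p q
    simp [hO, JKron, oneKron, Matrix.mul_apply, Matrix.one_apply]
  have hOO : Oᵀ * O = (n : ℝ) • (1 : Matrix (Fin s) (Fin s) ℝ) := by
    ext a b
    simp only [hO, oneKron, Matrix.mul_apply, Matrix.transpose_apply, Matrix.of_apply,
      Matrix.smul_apply, Matrix.one_apply, Fintype.sum_prod_type]
    by_cases hab : a = b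
    · subst hab; simp
    · have hba : b ≠ a := fun h => hab h.symm
      simp [hab, hba]
  have hLO : L * O = 0 := by
    ext p b
    have h := (hker (O *ᵥ Pi.single b 1)).2 ⟨_, rfl⟩
    rw [Matrix.mulVec_mulVec] at h
    have h2 := congrFun h p
    simpa using h2
  have hPO : P * O = O := by
    rw [hP, hJ, Matrix.smul_mul, Matrix.mul_assoc, hOO, Matrix.mul_smul, Matrix.mul_one,
      smul_smul, inv_mul_cancel₀ hn0, one_smul]
  have hPP : P * P = P := by
    conv_lhs => rw [hP, hJ]
    rw [Matrix.mul_smul, ← hJ, ← hP, hJ, ← Matrix.mul_assoc, hPO, ← hJ]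
  have hLP : L * P = 0 := by
    rw [hP, hJ, Matrix.mul_smul, ← Matrix.mul_assoc, hLO, Matrix.zero_mul, smul_zero]
  have hPT : Pᵀ = P := by
    rw [hP, hJ, Matrix.transpose_smul, Matrix.transpose_mul, Matrix.transpose_transpose]
  have hLT : Lᵀ = L := by
    have := hPSD.isHermitian
    rwa [Matrix.IsHermitian, Matrix.conjTranspose_eq_transpose_of_trivial] at this
  have hPL : P * L = 0 := by
    have := congrArg Matrix.transpose hLP
    rwa [Matrix.transpose_mul, hPT, hLT, Matrix.transpose_zero] at this
  have hunit : IsUnit (L + P) := by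
    rw [← Matrix.mulVec_injective_iff_isUnit]
    rw [← Matrix.coe_mulVecLin, injective_iff_map_eq_zero]
    intro v hv
    rw [Matrix.mulVecLin_apply] at hv
    have h1 : P *ᵥ v = 0 := by
      have h := congrArg (fun w => P *ᵥ w) hv
      simpa [Matrix.mulVec_mulVec, Matrix.mul_add, hPL, hPP] using h
    have h2 : L *ᵥ v = 0 := by
      rwa [Matrix.add_mulVec, h1, add_zero] at hv
    obtain ⟨c, hc⟩ := (hker v).1 h2
    rw [hc, Matrix.mulVec_mulVec, hPO] at h1
    rw [hc, h1]
  have hdet : IsUnit (L + P).det := (Matrix.isUnit_iff_isUnit_det _).1 hunit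
  have hMX : (L + P) * X = 1 := by rw [hX]; exact Matrix.mul_nonsing_inv _ hdet
  have hXM : X * (L + P) = 1 := by rw [hX]; exact Matrix.nonsing_inv_mul _ hdet
  have hXT : Xᵀ = X := by
    rw [hX, Matrix.transpose_nonsing_inv, Matrix.transpose_add, hLT, hPT]
  have hPX : P * X = P := by
    have : P * ((L + P) * X) = P := by rw [hMX, Matrix.mul_one]
    rwa [← Matrix.mul_assoc, Matrix.mul_add, hPL, hPP, zero_add] at this
  have hXP : X * P = P := by
    have := congrArg Matrix.transpose hPX
    rwa [Matrix.transpose_mul, hPT, hXT] at this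
  have hXLX : X - P = X * L * X := by
    have h : X * (L + P) * X = X := by rw [hXM, Matrix.one_mul]
    rw [Matrix.mul_add, Matrix.add_mul, hXP, hPX] at h
    exact sub_eq_of_eq_add h.symm
  -- the block selector
  set E : Matrix (Fin n × Fin s) (Fin s) ℝ :=
    Matrix.of fun p b => if p = (i, b) then 1 else 0 with hE
  have hblk : blk X i i - ((n : ℝ)⁻¹) • (1 : Matrix (Fin s) (Fin s) ℝ)
      = (X * E)ᴴ * L * (X * E) := by
    have h1 : (X * E)ᴴ * L * (X * E) = Eᵀ * (X - P) * E := by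
      rw [hXLX, Matrix.conjTranspose_eq_transpose_of_trivial, Matrix.transpose_mul, hXT]
      simp only [Matrix.mul_assoc]
    rw [h1]
    ext a b
    simp [hE, hP, JKron, blk, Matrix.mul_apply, Matrix.one_apply]
  rw [hblk]
  have hpsd := hPSD.conjTranspose_mul_mul_same (X * E)
  refine Matrix.PosDef.of_dotProduct_mulVec_pos hpsd.isHermitian fun x hx => ?_
  refine lt_of_le_of_ne (hpsd.dotProduct_mulVec_nonneg x) fun h0 => hx ?_
  have h1 : L *ᵥ ((X * E) *ᵥ x) = 0 := by
    rw [← hPSD.dotProduct_mulVec_zero_iff, h0, Matrix.star_mulVec, ← Matrix.dotProduct_mulVec]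
    simp only [Matrix.mulVec_mulVec, Matrix.mul_assoc]
  obtain ⟨c, hc⟩ := (hker _).1 h1
  have h2 : E *ᵥ x = O *ᵥ c := by
    have h : (L + P) *ᵥ ((X * E) *ᵥ x) = E *ᵥ x := by
      rw [Matrix.mulVec_mulVec, ← Matrix.mul_assoc, hMX, Matrix.one_mul]
    rw [← h, hc, Matrix.mulVec_mulVec, Matrix.add_mul, hLO, hPO, zero_add]
  haveI : Nontrivial (Fin n) := Fin.nontrivial_iff_two_le.2 hn
  obtain ⟨j, hj⟩ := exists_ne i
  funext a
  have h3 := congrFun h2 (i, a)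
  have h4 := congrFun h2 (j, a)
  simp [hE, hO, oneKron, Matrix.mulVec, dotProduct, hj] at h3 h4
  simp [h3, ← h4]
end
end

section
/- L X̄ (1 ⊗ I_s) + (2/n)(1 ⊗ I_s) = τ. -/
open Matrix Finset
open scoped Kronecker

noncomputable section

lemma aux_lap_sum {n s : ℕ} (G : SimpleGraph (Fin n)) [DecidableRel G.Adj]
    (W : Fin n → Fin n → Matrix (Fin s) (Fin s) ℝ) (p : Fin n × Fin s)
    (f : Fin n × Fin s → ℝ) (hf : ∀ c, f (p.1, c) = 0) :
    ∑ q, lap G W p q * f q =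
      - ∑ j ∈ univ.filter (fun j => G.Adj p.1 j), ∑ c, (W p.1 j)⁻¹ p.2 c * f (j, c) := by
  rw [Fintype.sum_prod_type, Finset.sum_filter, ← Finset.sum_neg_distrib]
  refine Finset.sum_congr rfl fun j _ => ?_
  by_cases h : p.1 = j
  · subst h
    simp [hf]
  · by_cases h2 : G.Adj p.1 j
    · simp [lap, h, h2]
    · simp [lap, h, h2]

lemma aux_JKron (n s : ℕ) : JKron n s = oneKron n s * (oneKron n s)ᵀ := by
  ext p q
  simp [JKron, oneKron, Matrix.mul_apply, Matrix.one_apply, eq_comm]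

lemma aux_OtO (n s : ℕ) : (oneKron n s)ᵀ * oneKron n s = (n : ℝ) • 1 := by
  ext a b
  simp only [oneKron, Matrix.mul_apply, Matrix.transpose_apply, Matrix.of_apply,
    Fintype.sum_prod_type, Matrix.smul_apply, Matrix.one_apply]
  by_cases h : a = b
  · subst h
    simp
  · have hba : ¬ b = a := fun e => h e.symm
    simp [h, hba]

/-- A symmetric matrix killed by `L` on the left and fixing the kernel is the projection `P`. -/
lemma aux_proj {m t : Type*} [Fintype m] [DecidableEq m] [Fintype t]
    (L P Q : Matrix m m ℝ) (O : Matrix m t ℝ)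
    (hker : ∀ v : m → ℝ, L *ᵥ v = 0 → ∃ c : t → ℝ, v = O *ᵥ c)
    (hPO : P * O = O) (hPt : Pᵀ = P) (hQt : Qᵀ = Q) (hLQ : L * Q = 0) (hQP : Q * P = P) :
    Q = P := by
  have h1 : P * Q = Q := by
    ext i j
    obtain ⟨c, hc⟩ := hker (Q.col j) (by
      ext i
      have := congrFun (congrFun hLQ i) j
      simpa [Matrix.mul_apply, Matrix.mulVec, dotProduct] using this)
    have h2 : P *ᵥ Q.col j = Q.col j := by
      rw [hc, Matrix.mulVec_mulVec, hPO]
    have := congrFun h2 i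
    simpa [Matrix.mul_apply, Matrix.mulVec, dotProduct] using this
  have h2 : (P * Q)ᵀ = Q * P := by rw [Matrix.transpose_mul, hPt, hQt]
  rw [h1, hQt, hQP] at h2
  exact h2

/-- `L X̄ (1 ⊗ Iₛ) + (2/n)(1 ⊗ Iₛ) = τ`. -/
theorem lap_bdiag_oneKron_eq_tau
    (n s : ℕ) (hn : 2 ≤ n) (hs : 1 ≤ s)
    (G : SimpleGraph (Fin n)) [DecidableRel G.Adj] (hconn : G.Connected)
    (W : Fin n → Fin n → Matrix (Fin s) (Fin s) ℝ)
    (hWsymm : ∀ i j, W i j = W j i)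
    (hWpd : ∀ i j, G.Adj i j → (W i j).PosDef)
    (hPSD : (lap G W).PosSemidef)
    (hrank : (lap G W).rank = n * s - s)
    (hker : ∀ v : Fin n × Fin s → ℝ,
      lap G W *ᵥ v = 0 ↔ ∃ c : Fin s → ℝ, v = oneKron n s *ᵥ c)
    (X : Matrix (Fin n × Fin s) (Fin n × Fin s) ℝ)
    (hX : X = (lap G W + ((n : ℝ)⁻¹) • JKron n s)⁻¹)
    (Ldag : Matrix (Fin n × Fin s) (Fin n × Fin s) ℝ)
    (hMP : IsMoorePenrose (lap G W) Ldag)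
    (R : Matrix (Fin n × Fin s) (Fin n × Fin s) ℝ)
    (hR : R = resist Ldag) :
    lap G W * bdiag X * oneKron n s + ((2 : ℝ) / n) • oneKron n s = tauMat G W R := by
  have hn0 : (n : ℝ) ≠ 0 := by
    have : n ≠ 0 := by omega
    exact_mod_cast this
  set L := lap G W with hL
  set O := oneKron n s with hO
  set P := ((n : ℝ)⁻¹) • JKron n s with hP
  obtain ⟨h1, h2, h3, h4⟩ := hMP
  have hLt : Lᵀ = L := by
    have := hPSD.isHermitian.eq
    rwa [Matrix.conjTranspose_eq_transpose_of_trivial] at this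
  have hPeq : P = ((n : ℝ)⁻¹) • (O * Oᵀ) := by rw [hP, aux_JKron]
  have hPt : Pᵀ = P := by
    rw [hPeq, Matrix.transpose_smul, Matrix.transpose_mul, Matrix.transpose_transpose]
  have hPO : P * O = O := by
    rw [hPeq, Matrix.smul_mul, Matrix.mul_assoc, aux_OtO, Matrix.mul_smul, Matrix.mul_one,
      smul_smul, inv_mul_cancel₀ hn0, one_smul]
  have hLO : L * O = 0 := by
    ext p b
    have := (hker (O *ᵥ Pi.single b 1)).2 ⟨_, rfl⟩
    rw [Matrix.mulVec_mulVec] at this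
    have := congrFun this p
    simpa using this
  have hLP : L * P = 0 := by
    rw [hPeq, Matrix.mul_smul, ← Matrix.mul_assoc, hLO, Matrix.zero_mul, smul_zero]
  have hPP : P * P = P := by
    nth_rewrite 2 [hPeq]
    rw [Matrix.mul_smul, ← Matrix.mul_assoc, hPO, ← hPeq]
  have hPL : P * L = 0 := by
    have := congrArg Matrix.transpose hLP
    rwa [Matrix.transpose_mul, hLt, hPt, Matrix.transpose_zero] at this
  have hk : ∀ v, L *ᵥ v = 0 → ∃ c : Fin s → ℝ, v = O *ᵥ c := fun v => (hker v).1
  have e1 : 1 - Ldag * L = P := by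
    refine aux_proj L P _ O hk hPO hPt ?_ ?_ ?_
    · rw [Matrix.transpose_sub, h4, Matrix.transpose_one]
    · rw [Matrix.mul_sub, ← Matrix.mul_assoc, h1, Matrix.mul_one, sub_self]
    · rw [Matrix.sub_mul, Matrix.mul_assoc, hLP, Matrix.mul_zero, Matrix.one_mul, sub_zero]
  have hLLK : L * (L * Ldag) = L := by
    have := congrArg Matrix.transpose h1
    rwa [Matrix.transpose_mul, h3, hLt] at this
  have hLKP : L * Ldag * P = 0 := by
    have : (P * (L * Ldag))ᵀ = 0 := by
      rw [← Matrix.mul_assoc, hPL, Matrix.zero_mul, Matrix.transpose_zero]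
    rwa [Matrix.transpose_mul, h3, hPt] at this
  have e2 : 1 - L * Ldag = P := by
    refine aux_proj L P _ O hk hPO hPt ?_ ?_ ?_
    · rw [Matrix.transpose_sub, h3, Matrix.transpose_one]
    · rw [Matrix.mul_sub, hLLK, Matrix.mul_one, sub_self]
    · rw [Matrix.sub_mul, hLKP, Matrix.one_mul, sub_zero]
  have eKL : Ldag * L = 1 - P := by rw [← e1]; abel
  have eLK : L * Ldag = 1 - P := by rw [← e2]; abel
  have hPK : P * Ldag = 0 := by
    rw [← h2, eKL, ← Matrix.mul_assoc, Matrix.mul_sub, hPP, Matrix.mul_one, sub_self,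
      Matrix.zero_mul]
  have hXe : X = Ldag + P := by
    rw [hX]
    refine Matrix.inv_eq_right_inv ?_
    rw [Matrix.add_mul, Matrix.mul_add, Matrix.mul_add, eLK, hLP, hPK, hPP]
    abel
  -- entrywise facts
  have hrow : ∀ p b, ∑ j, L p (j, b) = 0 := by
    intro p b
    have := congrFun (congrFun hLO p) b
    simpa [hO, oneKron, Matrix.mul_apply, Fintype.sum_prod_type] using this
  have hrowc : ∀ p (g : Fin s → ℝ), ∑ q : Fin n × Fin s, L p q * g q.2 = 0 := by
    intro p g
    rw [Fintype.sum_prod_type_right]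
    refine Finset.sum_eq_zero fun c _ => ?_
    change ∑ x, L p (x, c) * g c = 0
    rw [← Finset.sum_mul, hrow, zero_mul]
  have hPe : ∀ (i j : Fin n) (a b : Fin s), P (i, a) (j, b) = (n : ℝ)⁻¹ * (if a = b then 1 else 0) := by
    intro i j a b
    simp [hP, JKron, Matrix.one_apply]
  have hbX : ∀ q b, (bdiag X * O) q b = Ldag q (q.1, b) - Ldag q (q.1, b) + Ldag (q.1, q.2) (q.1, b) 
      + (n : ℝ)⁻¹ * (if q.2 = b then 1 else 0) := by
    rintro ⟨i, a⟩ b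
    rw [hXe]
    simp [bdiag, hO, oneKron, Matrix.mul_apply, Fintype.sum_prod_type, hPe]
  ext p b
  have hLK : ∑ q, L p q * Ldag q (p.1, b) = (if p.2 = b then 1 else 0) -
      (n : ℝ)⁻¹ * (if p.2 = b then 1 else 0) := by
    have := congrFun (congrFun eLK p) (p.1, b)
    rw [Matrix.mul_apply] at this
    rw [this]
    obtain ⟨i, a⟩ := p
    simp [Matrix.one_apply, hPe]
  have hLX : (L * bdiag X * O) p b = ∑ q : Fin n × Fin s, L p q * Ldag (q.1, q.2) (q.1, b) := by
    rw [Matrix.mul_assoc, Matrix.mul_apply]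
    simp only [hbX, sub_self, zero_add, mul_add, Finset.sum_add_distrib]
    rw [hrowc p (fun c => (n : ℝ)⁻¹ * (if c = b then 1 else 0)), add_zero]
  have htau : tauMat G W R p b = 2 * (if p.2 = b then 1 else 0) + ∑ q, L p q * R q (p.1, b) := by
    rw [hL, aux_lap_sum G W p (fun q => R q (p.1, b)) (by intro c; simp [hR, resist]; ring)]
    simp [tauMat, Matrix.sum_apply, Matrix.mul_apply, blk, Matrix.one_apply, sub_eq_add_neg]
  have hLR : ∑ q, L p q * R q (p.1, b) = ∑ q : Fin n × Fin s, L p q * Ldag (q.1, q.2) (q.1, b)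
      + ∑ q : Fin n × Fin s, L p q * Ldag (p.1, q.2) (p.1, b)
      - 2 * ∑ q, L p q * Ldag q (p.1, b) := by
    rw [Finset.mul_sum, ← Finset.sum_add_distrib, ← Finset.sum_sub_distrib]
    refine Finset.sum_congr rfl fun q _ => ?_
    simp only [hR, resist, Matrix.of_apply]
    ring
  rw [htau, hLR, hLK, hrowc p (fun c => Ldag (p.1, c) (p.1, b)), Matrix.add_apply, hLX]
  simp only [Matrix.smul_apply, hO, oneKron, Matrix.of_apply, smul_eq_mul]
  ring
end
end

section
/- (1ᵀ ⊗ I_s) τ = 2 I_s; equivalently, τᵀ (1 ⊗ I_s) = 2 I_s. -/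
open Matrix Finset
open scoped Kronecker

noncomputable section

theorem aux_blk_mul {n s : ℕ} (A B : Matrix (Fin n × Fin s) (Fin n × Fin s) ℝ) (i j : Fin n) :
    blk (A * B) i j = ∑ k, blk A i k * blk B k j := by
  ext a b
  simp [blk, Matrix.mul_apply, Matrix.sum_apply, Fintype.sum_prod_type]

/-- The edge weight inverse, extended by zero to non-edges. -/
def auxW {n s : ℕ} (G : SimpleGraph (Fin n)) [DecidableRel G.Adj]
    (W : Fin n → Fin n → Matrix (Fin s) (Fin s) ℝ) (i j : Fin n) : Matrix (Fin s) (Fin s) ℝ :=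
  if G.Adj i j then (W i j)⁻¹ else 0

theorem aux_blk_lap {n s : ℕ} (G : SimpleGraph (Fin n)) [DecidableRel G.Adj]
    (W : Fin n → Fin n → Matrix (Fin s) (Fin s) ℝ) (i j : Fin n) :
    blk (lap G W) i j = (if i = j then ∑ k, auxW G W i k else 0) - auxW G W i j := by
  ext a b
  by_cases h : i = j
  · subst h
    simp [blk, lap, auxW, Finset.sum_filter]
  · by_cases h2 : G.Adj i j <;> simp [blk, lap, auxW, h, h2]

theorem aux_blk_resist {n s : ℕ} (K : Matrix (Fin n × Fin s) (Fin n × Fin s) ℝ) (i j : Fin n) :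
    blk (resist K) i j = blk K i i + blk K j j - (2 : ℝ) • blk K i j := by
  ext a b
  simp [blk, resist]

theorem aux_one_tau {n s : ℕ} (G : SimpleGraph (Fin n)) [DecidableRel G.Adj]
    (W : Fin n → Fin n → Matrix (Fin s) (Fin s) ℝ)
    (R : Matrix (Fin n × Fin s) (Fin n × Fin s) ℝ) :
    (oneKron n s)ᵀ * tauMat G W R =
      ∑ i, ((2 : ℝ) • (1 : Matrix (Fin s) (Fin s) ℝ) - ∑ j, auxW G W i j * blk R j i) := by
  have h : ∀ i, ∑ j, auxW G W i j * blk R j i =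
      ∑ j ∈ univ.filter (fun j => G.Adj i j), (W i j)⁻¹ * blk R j i := by
    intro i
    rw [Finset.sum_filter]
    refine Finset.sum_congr rfl fun j _ => ?_
    by_cases h : G.Adj i j <;> simp [auxW, h]
  simp only [h]
  ext a b
  rw [Matrix.sum_apply, Matrix.mul_apply, Fintype.sum_prod_type]
  refine Finset.sum_congr rfl fun i _ => ?_
  simp only [oneKron, tauMat, Matrix.transpose_apply, Matrix.of_apply, ite_mul, one_mul, zero_mul,
    Finset.sum_ite_eq', Finset.mem_univ, if_true]

theorem aux_proj_s7 {n s : ℕ} (hn : 2 ≤ n) (L K : Matrix (Fin n × Fin s) (Fin n × Fin s) ℝ)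
    (hL : Lᵀ = L)
    (hker : ∀ v : Fin n × Fin s → ℝ, L *ᵥ v = 0 ↔ ∃ c : Fin s → ℝ, v = oneKron n s *ᵥ c)
    (hMP : IsMoorePenrose L K) :
    L * K = 1 - (1 / (n : ℝ)) • (oneKron n s * (oneKron n s)ᵀ) := by
  obtain ⟨h1, -, h3, -⟩ := hMP
  have h4 : L * (1 - L * K) = 0 := by
    have := congrArg Matrix.transpose h1
    rw [Matrix.transpose_mul, h3, hL] at this
    rw [Matrix.mul_sub, this, Matrix.mul_one, sub_self]
  have h5 : ∀ q, ∃ c : Fin s → ℝ, (1 - L * K).col q = oneKron n s *ᵥ c := by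
    intro q
    rw [← hker]
    ext p
    exact congrFun (congrFun h4 p) q
  choose C hC using h5
  have h6 : 1 - L * K = oneKron n s * (Matrix.of C)ᵀ := by
    ext p q
    exact congrFun (hC q) p
  have h7 : L * oneKron n s = 0 := by
    ext p b
    have := (hker (oneKron n s *ᵥ Pi.single b 1)).2 ⟨_, rfl⟩
    rw [Matrix.mulVec_single_one] at this
    exact congrFun this p
  have h8 : (oneKron n s)ᵀ * L = 0 := by
    have := congrArg Matrix.transpose h7
    rwa [Matrix.transpose_mul, hL, Matrix.transpose_zero] at this
  have h9 : (oneKron n s)ᵀ * oneKron n s = (n : ℝ) • 1 := by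
    ext a b
    by_cases h : b = a
    · simp [Matrix.mul_apply, oneKron, Fintype.sum_prod_type, h]
    · have h' : ¬ a = b := fun e => h e.symm
      simp [Matrix.mul_apply, oneKron, Fintype.sum_prod_type, Matrix.one_apply, h, h']
  have h10 : (oneKron n s)ᵀ = (n : ℝ) • (Matrix.of C)ᵀ := by
    have := congrArg (fun M => (oneKron n s)ᵀ * M) h6
    simpa only [Matrix.mul_sub, ← Matrix.mul_assoc, h8, h9, Matrix.zero_mul, Matrix.mul_one,
      sub_zero, Matrix.smul_mul, Matrix.one_mul] using this
  have hn0 : (n : ℝ) ≠ 0 := by positivity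
  rw [h10, Matrix.mul_smul, smul_smul, ← h6, one_div, inv_mul_cancel₀ hn0, one_smul, sub_sub_cancel]

theorem aux_blk_proj {n s : ℕ} (hn : 2 ≤ n) (i : Fin n) :
    blk (1 - (1 / (n : ℝ)) • (oneKron n s * (oneKron n s)ᵀ)) i i =
      (1 - 1 / (n : ℝ)) • (1 : Matrix (Fin s) (Fin s) ℝ) := by
  ext a b
  by_cases h : a = b
  · subst h
    simp [blk, oneKron, Matrix.mul_apply]
  · have h' : ¬ b = a := fun e => h e.symm
    simp [blk, oneKron, Matrix.mul_apply, Matrix.one_apply, h, h']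

/-- `(1ᵀ ⊗ Iₛ) τ = 2 Iₛ`; equivalently `τᵀ (1 ⊗ Iₛ) = 2 Iₛ`. -/
theorem oneKron_transpose_mul_tau
    (n s : ℕ) (hn : 2 ≤ n) (hs : 1 ≤ s)
    (G : SimpleGraph (Fin n)) [DecidableRel G.Adj] (hconn : G.Connected)
    (W : Fin n → Fin n → Matrix (Fin s) (Fin s) ℝ)
    (hWsymm : ∀ i j, W i j = W j i)
    (hWpd : ∀ i j, G.Adj i j → (W i j).PosDef)
    (hPSD : (lap G W).PosSemidef)
    (hrank : (lap G W).rank = n * s - s)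
    (hker : ∀ v : Fin n × Fin s → ℝ,
      lap G W *ᵥ v = 0 ↔ ∃ c : Fin s → ℝ, v = oneKron n s *ᵥ c)
    (Ldag : Matrix (Fin n × Fin s) (Fin n × Fin s) ℝ)
    (hMP : IsMoorePenrose (lap G W) Ldag)
    (R : Matrix (Fin n × Fin s) (Fin n × Fin s) ℝ)
    (hR : R = resist Ldag) :
    (oneKron n s)ᵀ * tauMat G W R = (2 : ℝ) • (1 : Matrix (Fin s) (Fin s) ℝ) ∧
      (tauMat G W R)ᵀ * oneKron n s = (2 : ℝ) • (1 : Matrix (Fin s) (Fin s) ℝ) := by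
  have hL : (lap G W)ᵀ = lap G W := by
    have := hPSD.isHermitian.eq
    rwa [Matrix.conjTranspose_eq_transpose_of_trivial] at this
  have hP := aux_proj_s7 hn _ _ hL hker hMP
  have hsym : ∀ i j, auxW G W i j = auxW G W j i := by
    intro i j
    simp [auxW, hWsymm i j, G.adj_comm i j]
  have hdiag : ∀ i, ∑ j, auxW G W i j * blk Ldag i i - ∑ j, auxW G W i j * blk Ldag j i =
      (1 - 1 / (n : ℝ)) • (1 : Matrix (Fin s) (Fin s) ℝ) := by
    intro i
    rw [← aux_blk_proj hn i, ← hP, aux_blk_mul]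
    simp only [aux_blk_lap, sub_mul, Finset.sum_sub_distrib, ite_mul, zero_mul,
      Finset.sum_ite_eq, Finset.mem_univ, if_true, Finset.sum_mul]
  have hswap : ∑ i, ∑ j, auxW G W i j * blk Ldag j j = ∑ i, ∑ j, auxW G W i j * blk Ldag i i := by
    rw [Finset.sum_comm]
    refine Finset.sum_congr rfl fun i _ => Finset.sum_congr rfl fun j _ => ?_
    rw [hsym]
  have hsum := Finset.sum_congr (rfl : (univ : Finset (Fin n)) = univ) fun i _ => hdiag i
  rw [Finset.sum_sub_distrib] at hsum
  have hn0 : (n : ℝ) ≠ 0 := by positivity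
  have key : (oneKron n s)ᵀ * tauMat G W R = (2 : ℝ) • (1 : Matrix (Fin s) (Fin s) ℝ) := by
    rw [aux_one_tau, hR]
    simp only [aux_blk_resist, mul_sub, mul_add, Finset.sum_sub_distrib, Finset.sum_add_distrib,
      Matrix.mul_smul, ← Finset.smul_sum, hswap]
    rw [sub_eq_iff_eq_add] at hsum
    rw [hsum]
    simp only [Finset.sum_const, Finset.card_univ, Fintype.card_fin, ← Nat.cast_smul_eq_nsmul ℝ]
    ext a b
    simp only [Matrix.sub_apply, Matrix.add_apply, Matrix.smul_apply, smul_eq_mul]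
    field_simp
    ring
  refine ⟨key, ?_⟩
  have := congrArg Matrix.transpose key
  rwa [Matrix.transpose_mul, Matrix.transpose_transpose, Matrix.transpose_smul,
    Matrix.transpose_one] at this
end
end

section
/- Σ_{i=1}^n Σ_{j∼i} W_{ij}⁻¹ R_{ji} = 2(n−1) I_s. -/
open Matrix Finset
open scoped Kronecker

noncomputable section

theorem trace_aux {n s : ℕ} (hn : 0 < n)
    (L K : Matrix (Fin n × Fin s) (Fin n × Fin s) ℝ)
    (hL : Lᵀ = L) (h1 : L * K * L = L) (h3 : (L * K)ᵀ = L * K)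
    (hker : ∀ v : Fin n × Fin s → ℝ,
      L *ᵥ v = 0 ↔ ∃ c : Fin s → ℝ, v = oneKron n s *ᵥ c) :
    ∑ i : Fin n, blk (L * K) i i = ((n : ℝ) - 1) • (1 : Matrix (Fin s) (Fin s) ℝ) := by
  have hLP : L * (L * K) = L := by
    have := congrArg Matrix.transpose h1
    rwa [Matrix.transpose_mul, h3, hL] at this
  have hLM : L * (1 - L * K) = 0 := by rw [mul_sub, hLP, mul_one, sub_self]
  have hLo : L * oneKron n s = 0 := by
    ext p b
    have := (hker (oneKron n s *ᵥ Pi.single b 1)).2 ⟨_, rfl⟩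
    rw [Matrix.mulVec_mulVec] at this
    simpa using congrFun this p
  have hMo : (1 - L * K) * oneKron n s = oneKron n s := by
    rw [← h3, Matrix.transpose_mul, hL, Matrix.sub_mul, Matrix.mul_assoc, hLo]
    simp
  have hcol : ∀ (i j : Fin n) (a : Fin s) q, (1 - L * K) (i, a) q = (1 - L * K) (j, a) q := by
    intro i j a q
    have h : L *ᵥ (fun p => (1 - L * K) p q) = 0 := by
      ext p
      exact congrFun (congrFun hLM p) q
    obtain ⟨c, hc⟩ := (hker _).1 h
    have hi := congrFun hc (i, a)
    have hj := congrFun hc (j, a)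
    simp only [Matrix.mulVec, dotProduct, oneKron, Matrix.of_apply] at hi hj
    rw [hi, hj]
  ext a b
  have key : ∑ j : Fin n, (1 - L * K) (j, a) (j, b) = if a = b then 1 else 0 := by
    have := congrFun (congrFun hMo (⟨0, hn⟩, a)) b
    simp only [Matrix.mul_apply (M := 1 - L * K), oneKron, Matrix.of_apply,
      Fintype.sum_prod_type, mul_ite, mul_one, mul_zero, Finset.sum_ite_eq',
      Finset.sum_ite_eq, Finset.mem_univ, if_true] at this
    rw [← this]
    exact Finset.sum_congr rfl fun j _ => hcol _ _ _ _
  simp only [Matrix.sub_apply, Finset.sum_sub_distrib] at key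
  simp only [Matrix.sum_apply, blk, Matrix.of_apply, Matrix.smul_apply, smul_eq_mul]
  by_cases hab : a = b
  · subst hab
    simp at key ⊢
    linarith
  · simp [hab, Matrix.one_apply] at key ⊢
    linarith

/-- `Σ_{i=1}^n Σ_{j ∼ i} (W i j)⁻¹ R_{ji} = 2(n-1) Iₛ`. -/
theorem sum_winv_resist_blocks
    (n s : ℕ) (hn : 2 ≤ n) (hs : 1 ≤ s)
    (G : SimpleGraph (Fin n)) [DecidableRel G.Adj] (hconn : G.Connected)
    (W : Fin n → Fin n → Matrix (Fin s) (Fin s) ℝ)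
    (hWsymm : ∀ i j, W i j = W j i)
    (hWpd : ∀ i j, G.Adj i j → (W i j).PosDef)
    (hPSD : (lap G W).PosSemidef)
    (hrank : (lap G W).rank = n * s - s)
    (hker : ∀ v : Fin n × Fin s → ℝ,
      lap G W *ᵥ v = 0 ↔ ∃ c : Fin s → ℝ, v = oneKron n s *ᵥ c)
    (Ldag : Matrix (Fin n × Fin s) (Fin n × Fin s) ℝ)
    (hMP : IsMoorePenrose (lap G W) Ldag)
    (R : Matrix (Fin n × Fin s) (Fin n × Fin s) ℝ)
    (hR : R = resist Ldag) :
    ∑ i : Fin n, ∑ j ∈ univ.filter (fun j => G.Adj i j), (W i j)⁻¹ * blk R j i =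
      (2 * ((n : ℝ) - 1)) • (1 : Matrix (Fin s) (Fin s) ℝ) := by
  obtain ⟨h1, -, h3, -⟩ := hMP
  have hLs : (lap G W)ᵀ = lap G W := by
    have := hPSD.isHermitian
    simpa [Matrix.IsHermitian, Matrix.conjTranspose_eq_transpose_of_trivial] using this
  have hblk := trace_aux (by omega) (lap G W) Ldag hLs h1 h3 hker
  have hsum : ∑ i : Fin n, ∑ j : Fin n, blk (lap G W) i j * blk Ldag j i
      = ((n : ℝ) - 1) • (1 : Matrix (Fin s) (Fin s) ℝ) := by
    rw [← hblk]
    refine Finset.sum_congr rfl fun i _ => ?_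
    ext a b
    simp [blk, Matrix.sum_apply, Matrix.mul_apply, Fintype.sum_prod_type]
  let A : Fin n → Fin n → Matrix (Fin s) (Fin s) ℝ := fun i j => if G.Adj i j then (W i j)⁻¹ else 0
  have hA : ∀ i j, A i j = A j i := fun i j => by
    simp only [A, G.adj_comm i j, hWsymm i j]
  have hL : ∀ i j, blk (lap G W) i j = (if i = j then ∑ k, A i k else 0) - A i j := by
    intro i j
    ext a b
    by_cases hij : i = j
    · subst hij
      simp [blk, lap, A, Finset.sum_filter]
    · by_cases hadj : G.Adj i j <;> simp [blk, lap, A, hij, hadj]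
  have hRb : ∀ i j, blk R j i = blk Ldag j j + blk Ldag i i - (2 : ℝ) • blk Ldag j i := by
    intro i j
    subst hR
    ext a b
    simp [blk, resist]
  have e1 : ∑ i : Fin n, ∑ j : Fin n, blk (lap G W) i j * blk Ldag j i
      = ∑ i, ∑ j, A i j * blk Ldag i i - ∑ i, ∑ j, A i j * blk Ldag j i := by
    rw [← Finset.sum_sub_distrib]
    refine Finset.sum_congr rfl fun i _ => ?_
    simp [hL, sub_mul, Finset.sum_mul, ite_mul]
  have e2 : ∑ i, ∑ j, A i j * blk Ldag j j = ∑ i, ∑ j, A i j * blk Ldag i i := by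
    rw [Finset.sum_comm]
    refine Finset.sum_congr rfl fun i _ => Finset.sum_congr rfl fun j _ => ?_
    rw [hA]
  have e3 : ∑ i : Fin n, ∑ j ∈ univ.filter (fun j => G.Adj i j), (W i j)⁻¹ * blk R j i
      = ∑ i, ∑ j, A i j * blk R j i := by
    refine Finset.sum_congr rfl fun i _ => ?_
    rw [Finset.sum_filter]
    refine Finset.sum_congr rfl fun j _ => ?_
    simp only [A, ite_mul, zero_mul]
  rw [e3, mul_smul, ← hsum, e1]
  simp only [hRb, mul_sub, mul_add, Finset.sum_sub_distrib, Finset.sum_add_distrib,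
    Matrix.mul_smul, ← Finset.smul_sum, e2]
  rw [smul_sub, two_smul, two_smul]
end
end

section
/- L R L = −2 L. -/
open Matrix Finset
open scoped Kronecker

noncomputable section

/-- `L R L = -2 L`. -/
theorem lap_mul_resist_mul_lap
    (n s : ℕ) (hn : 2 ≤ n) (hs : 1 ≤ s)
    (G : SimpleGraph (Fin n)) [DecidableRel G.Adj] (hconn : G.Connected)
    (W : Fin n → Fin n → Matrix (Fin s) (Fin s) ℝ)
    (hWsymm : ∀ i j, W i j = W j i)
    (hWpd : ∀ i j, G.Adj i j → (W i j).PosDef)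
    (hPSD : (lap G W).PosSemidef)
    (hrank : (lap G W).rank = n * s - s)
    (hker : ∀ v : Fin n × Fin s → ℝ,
      lap G W *ᵥ v = 0 ↔ ∃ c : Fin s → ℝ, v = oneKron n s *ᵥ c)
    (Ldag : Matrix (Fin n × Fin s) (Fin n × Fin s) ℝ)
    (hMP : IsMoorePenrose (lap G W) Ldag)
    (R : Matrix (Fin n × Fin s) (Fin n × Fin s) ℝ)
    (hR : R = resist Ldag) :
    lap G W * R * lap G W = (-2 : ℝ) • lap G W := by
  have hLO : lap G W * oneKron n s = 0 := by
    ext p b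
    have h := (hker (oneKron n s *ᵥ Pi.single b 1)).2 ⟨_, rfl⟩
    rw [Matrix.mulVec_mulVec, Matrix.mulVec_single_one] at h
    exact congrFun h p
  have hsym : (lap G W)ᵀ = lap G W := by
    have h := hPSD.isHermitian
    rwa [Matrix.IsHermitian, Matrix.conjTranspose_eq_transpose_of_trivial] at h
  have hOL : (oneKron n s)ᵀ * lap G W = 0 := by
    have h := congrArg Matrix.transpose hLO
    rwa [Matrix.transpose_mul, hsym, Matrix.transpose_zero] at h
  have hdec : R = (Matrix.of fun (p : Fin n × Fin s) (b : Fin s) => Ldag (p.1, p.2) (p.1, b))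
        * (oneKron n s)ᵀ
      + oneKron n s * (Matrix.of fun (a : Fin s) (q : Fin n × Fin s) => Ldag (q.1, a) (q.1, q.2))
      - (2 : ℝ) • Ldag := by
    rw [hR]
    ext p q
    simp [resist, oneKron, Matrix.mul_apply]
  rw [hdec, Matrix.mul_sub, Matrix.mul_add, ← Matrix.mul_assoc (lap G W) (oneKron n s), hLO,
    Matrix.zero_mul, add_zero, Matrix.sub_mul, Matrix.mul_assoc (lap G W) (_ * _),
    Matrix.mul_assoc _ (oneKron n s)ᵀ, hOL, Matrix.mul_zero, Matrix.mul_zero, zero_sub,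
    Matrix.mul_smul, Matrix.smul_mul, hMP.1, neg_smul]
end
end

section
/- L R + 2 I_{ns} = τ (1ᵀ ⊗ I_s). -/
open Matrix Finset
open scoped Kronecker

noncomputable section

/-- `L R + 2 I_{ns} = τ (1ᵀ ⊗ Iₛ)`. -/
theorem lap_mul_resist_add_two
    (n s : ℕ) (hn : 2 ≤ n) (hs : 1 ≤ s)
    (G : SimpleGraph (Fin n)) [DecidableRel G.Adj] (hconn : G.Connected)
    (W : Fin n → Fin n → Matrix (Fin s) (Fin s) ℝ)
    (hWsymm : ∀ i j, W i j = W j i)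
    (hWpd : ∀ i j, G.Adj i j → (W i j).PosDef)
    (hPSD : (lap G W).PosSemidef)
    (hrank : (lap G W).rank = n * s - s)
    (hker : ∀ v : Fin n × Fin s → ℝ,
      lap G W *ᵥ v = 0 ↔ ∃ c : Fin s → ℝ, v = oneKron n s *ᵥ c)
    (Ldag : Matrix (Fin n × Fin s) (Fin n × Fin s) ℝ)
    (hMP : IsMoorePenrose (lap G W) Ldag)
    (R : Matrix (Fin n × Fin s) (Fin n × Fin s) ℝ)
    (hR : R = resist Ldag) :
    lap G W * R + (2 : ℝ) • (1 : Matrix (Fin n × Fin s) (Fin n × Fin s) ℝ) =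
      tauMat G W R * (oneKron n s)ᵀ := by
  have hsymm : (lap G W)ᵀ = lap G W := by
    have := hPSD.isHermitian
    simpa [Matrix.IsHermitian, Matrix.conjTranspose_eq_transpose_of_trivial] using this
  obtain ⟨h1, -, h3, -⟩ := hMP
  -- columns of `1 - L K` lie in the null space
  have hLM : lap G W * (1 - lap G W * Ldag) = 0 := by
    have h4 : (1 - lap G W * Ldag) * lap G W = 0 := by
      rw [Matrix.sub_mul, Matrix.one_mul, h1, sub_self]
    have h5 := congrArg Matrix.transpose h4
    rw [Matrix.transpose_mul, Matrix.transpose_sub, h3, hsymm, Matrix.transpose_one,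
      Matrix.transpose_zero] at h5
    exact h5
  have hMs : (1 - lap G W * Ldag)ᵀ = 1 - lap G W * Ldag := by
    rw [Matrix.transpose_sub, h3, Matrix.transpose_one]
  set M := 1 - lap G W * Ldag with hM
  have hone : ∀ (c : Fin s → ℝ) (p : Fin n × Fin s), (oneKron n s *ᵥ c) p = c p.2 := by
    intro c p
    simp [oneKron, Matrix.mulVec, dotProduct]
  have hcol : ∀ q p i, M p q = M (i, p.2) q := by
    intro q p i
    have h6 : lap G W *ᵥ (fun r => M r q) = 0 := by
      funext r
      exact congrFun (congrFun hLM r) q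
    obtain ⟨c, hc⟩ := (hker _).1 h6
    have e1 := congrFun hc p
    have e2 := congrFun hc (i, p.2)
    rw [hone] at e1 e2
    exact e1.trans e2.symm
  have hrow : ∀ p q i, M p q = M p (i, q.2) := by
    intro p q i
    have e1 := congrFun (congrFun hMs p) q
    have e2 := congrFun (congrFun hMs p) (i, q.2)
    rw [Matrix.transpose_apply] at e1 e2
    rw [← e1, ← e2]
    exact hcol p q i
  have hzero : ∀ (c : Fin s → ℝ) p, ∑ r, lap G W p r * c r.2 = 0 := by
    intro c p
    have h7 := congrFun ((hker (oneKron n s *ᵥ c)).2 ⟨c, rfl⟩) p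
    simp only [Matrix.mulVec, dotProduct, Pi.zero_apply] at h7
    rw [← h7]
    refine Finset.sum_congr rfl fun r _ => ?_
    congr 1
    exact (hone c r).symm
  have hLR : ∀ p q, (lap G W * R + (2 : ℝ) • (1 : Matrix (Fin n × Fin s) (Fin n × Fin s) ℝ)) p q =
      ∑ r, lap G W p r * Ldag (r.1, r.2) (r.1, q.2) + 2 * M p q := by
    intro p q
    have h8 := hzero (fun a => Ldag (q.1, a) (q.1, q.2)) p
    have h9 : (lap G W * R) p q = ∑ r, lap G W p r * Ldag (r.1, r.2) (r.1, q.2) +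
        ∑ r, lap G W p r * Ldag (q.1, r.2) (q.1, q.2) - 2 * (lap G W * Ldag) p q := by
      rw [hR, Matrix.mul_apply, Matrix.mul_apply, Finset.mul_sum, ← Finset.sum_add_distrib,
        ← Finset.sum_sub_distrib]
      refine Finset.sum_congr rfl fun r _ => ?_
      simp only [resist, Matrix.of_apply]
      ring
    rw [Matrix.add_apply, h9, h8, hM, Matrix.smul_apply, Matrix.sub_apply, smul_eq_mul]
    ring
  have hRd : ∀ i a b, R (i, a) (i, b) = 0 := by
    intro i a b
    simp only [hR, resist, Matrix.of_apply]
    ring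
  have htau : ∀ p b, tauMat G W R p b =
      (lap G W * R + (2 : ℝ) • (1 : Matrix (Fin n × Fin s) (Fin n × Fin s) ℝ)) p (p.1, b) := by
    intro p b
    obtain ⟨i, a⟩ := p
    have h10 : (lap G W * R) (i, a) (i, b) =
        -∑ j, if G.Adj i j then ∑ c, (W i j)⁻¹ a c * R (j, c) (i, b) else 0 := by
      rw [Matrix.mul_apply, Fintype.sum_prod_type, ← Finset.sum_neg_distrib]
      refine Finset.sum_congr rfl fun j _ => ?_
      by_cases hij : i = j
      · subst hij
        simp [hRd]
      · by_cases hadj : G.Adj i j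
        · simp [lap, hij, hadj]
        · simp [lap, hij, hadj]
    have h11 : (1 : Matrix (Fin n × Fin s) (Fin n × Fin s) ℝ) (i, a) (i, b) =
        (1 : Matrix (Fin s) (Fin s) ℝ) a b := by
      simp [Matrix.one_apply]
    rw [Matrix.add_apply, h10, Matrix.smul_apply, h11, ← Finset.sum_filter]
    simp only [tauMat, Matrix.of_apply, Matrix.sub_apply, Matrix.smul_apply, Matrix.sum_apply,
      Matrix.mul_apply, blk]
    ring
  ext p q
  have h12 : (tauMat G W R * (oneKron n s)ᵀ) p q = tauMat G W R p q.2 := by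
    simp [Matrix.mul_apply, oneKron]
  rw [h12, htau, hLR, hLR, hrow p q p.1]
end
end

section
/- L R τ = 0 and R τ = (1/2)(1 ⊗ I_s)(τᵀ R τ). -/
open Matrix Finset
open scoped Kronecker

noncomputable section

lemma oneKron_exists {n s : ℕ} {m : Type*} {L : Matrix (Fin n × Fin s) (Fin n × Fin s) ℝ}
    (hker : ∀ v : Fin n × Fin s → ℝ, L *ᵥ v = 0 ↔ ∃ c : Fin s → ℝ, v = oneKron n s *ᵥ c)
    (M : Matrix (Fin n × Fin s) m ℝ) (h : L * M = 0) :
    ∃ C : Matrix (Fin s) m ℝ, M = oneKron n s * C := by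
  have h1 : ∀ j, ∃ c : Fin s → ℝ, (fun i => M i j) = oneKron n s *ᵥ c := by
    intro j
    rw [← hker]
    ext i
    exact congrFun (congrFun h i) j
  choose c hc using h1
  refine ⟨Matrix.of fun a j => c j a, ?_⟩
  ext i j
  exact congrFun (hc j) i

lemma oneKron_gram (n s : ℕ) : (oneKron n s)ᵀ * oneKron n s = (n : ℝ) • (1 : Matrix _ _ ℝ) := by
  ext a b
  simp [oneKron, Matrix.mul_apply, Fintype.sum_prod_type, Matrix.one_apply, eq_comm]
  split_ifs <;> simp

lemma diag_lap_mul {n s : ℕ} (G : SimpleGraph (Fin n)) [DecidableRel G.Adj]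
    (W : Fin n → Fin n → Matrix (Fin s) (Fin s) ℝ)
    (R : Matrix (Fin n × Fin s) (Fin n × Fin s) ℝ) (hR : ∀ i a b, R (i, a) (i, b) = 0)
    (i : Fin n) (a b : Fin s) :
    (lap G W * R) (i, a) (i, b) =
      - (∑ j ∈ univ.filter (fun j => G.Adj i j), (W i j)⁻¹ * blk R j i) a b := by
  rw [Matrix.mul_apply, Fintype.sum_prod_type, Matrix.sum_apply, Finset.sum_filter,
    ← Finset.sum_neg_distrib]
  refine Finset.sum_congr rfl fun j _ => ?_
  by_cases hij : i = j
  · subst hij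
    simp [hR]
  · by_cases h : G.Adj i j <;> simp [lap, hij, h, Matrix.mul_apply, blk]

/-- `L R τ = 0` and `R τ = (1/2)(1 ⊗ Iₛ)(τᵀ R τ)`. -/
theorem lap_resist_tau_eq_zero
    (n s : ℕ) (hn : 2 ≤ n) (hs : 1 ≤ s)
    (G : SimpleGraph (Fin n)) [DecidableRel G.Adj] (hconn : G.Connected)
    (W : Fin n → Fin n → Matrix (Fin s) (Fin s) ℝ)
    (hWsymm : ∀ i j, W i j = W j i)
    (hWpd : ∀ i j, G.Adj i j → (W i j).PosDef)
    (hPSD : (lap G W).PosSemidef)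
    (hrank : (lap G W).rank = n * s - s)
    (hker : ∀ v : Fin n × Fin s → ℝ,
      lap G W *ᵥ v = 0 ↔ ∃ c : Fin s → ℝ, v = oneKron n s *ᵥ c)
    (Ldag : Matrix (Fin n × Fin s) (Fin n × Fin s) ℝ)
    (hMP : IsMoorePenrose (lap G W) Ldag)
    (R : Matrix (Fin n × Fin s) (Fin n × Fin s) ℝ)
    (hR : R = resist Ldag) :
    lap G W * R * tauMat G W R = 0 ∧
      R * tauMat G W R =
        ((1 : ℝ) / 2) • (oneKron n s * ((tauMat G W R)ᵀ * R * tauMat G W R)) := by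
  have hL : (lap G W)ᵀ = lap G W := by
    have := hPSD.1
    rwa [Matrix.IsHermitian, Matrix.conjTranspose_eq_transpose_of_trivial] at this
  set L := lap G W with hLdef
  set U := oneKron n s with hU
  have hn0 : (n : ℝ) ≠ 0 := by
    have : n ≠ 0 := by omega
    exact_mod_cast this
  have hUU : Uᵀ * U = (n : ℝ) • (1 : Matrix _ _ ℝ) := oneKron_gram n s
  have hLU : L * U = 0 := by
    ext i j
    have := (hker (U *ᵥ Pi.single j 1)).2 ⟨_, rfl⟩
    have h2 := congrFun this i
    rw [Matrix.mulVec_mulVec, Matrix.mulVec_single_one] at h2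
    exact h2
  have hUL : Uᵀ * L = 0 := by
    rw [← hL, ← Matrix.transpose_mul, hLU, Matrix.transpose_zero]
  obtain ⟨hm1, -, hm3, -⟩ := hMP
  have hLK : L * Ldag = 1 - (1 / (n : ℝ)) • (U * Uᵀ) := by
    have hLQ : L * (1 - L * Ldag) = 0 := by
      have : ((1 - L * Ldag) * L)ᵀ = 0 := by
        rw [Matrix.sub_mul, hm1, Matrix.one_mul, sub_self, Matrix.transpose_zero]
      rwa [Matrix.transpose_mul, Matrix.transpose_sub, hm3, hL, Matrix.transpose_one] at this
    obtain ⟨C, hC⟩ := oneKron_exists hker _ hLQ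
    rw [← hU] at hC
    have h1 : Uᵀ * (1 - L * Ldag) = Uᵀ := by
      rw [Matrix.mul_sub, ← Matrix.mul_assoc, hUL]; simp
    rw [hC, ← Matrix.mul_assoc, hUU, Matrix.smul_mul, Matrix.one_mul] at h1
    rw [← h1, Matrix.mul_smul, smul_smul, one_div, inv_mul_cancel₀ hn0, one_smul, ← hC]
    abel
  let D : Matrix (Fin n × Fin s) (Fin s) ℝ := Matrix.of fun p b => Ldag p (p.1, b)
  let E : Matrix (Fin s) (Fin n × Fin s) ℝ := Matrix.of fun a q => Ldag (q.1, a) q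
  have hRD : R = D * Uᵀ + U * E - (2 : ℝ) • Ldag := by
    rw [hR]
    ext p q
    simp [resist, D, E, hU, oneKron, Matrix.mul_apply]
  have hLR : L * R = L * D * Uᵀ - (2 : ℝ) • 1 + (2 / (n : ℝ)) • (U * Uᵀ) := by
    rw [hRD, Matrix.mul_sub, Matrix.mul_add, ← Matrix.mul_assoc, ← Matrix.mul_assoc, hLU,
      Matrix.mul_smul, hLK, smul_sub, smul_smul, Matrix.zero_mul, add_zero]
    rw [show (2 : ℝ) * (1 / n) = 2 / n by ring]
    abel
  have htau : tauMat G W R = L * D + (2 / (n : ℝ)) • U := by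
    ext ⟨i, a⟩ b
    have h0 : ∀ i a b, R (i, a) (i, b) = 0 := by
      intro i a b
      rw [hR]; simp [resist]; ring
    have h1 := diag_lap_mul G W R h0 i a b
    rw [← hLdef, hLR] at h1
    have h2 : (L * D * Uᵀ) (i, a) (i, b) = (L * D) (i, a) b := by
      rw [Matrix.mul_apply]; simp [hU, oneKron]
    have h3 : (U * Uᵀ) (i, a) (i, b) = U (i, a) b := by
      rw [Matrix.mul_apply]; simp [hU, oneKron]
    have h4 : (1 : Matrix (Fin n × Fin s) (Fin n × Fin s) ℝ) (i, a) (i, b)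
        = (1 : Matrix (Fin s) (Fin s) ℝ) a b := by
      simp [Matrix.one_apply]
    rw [Matrix.add_apply, Matrix.sub_apply, Matrix.smul_apply, Matrix.smul_apply, h2, h3, h4] at h1
    simp only [tauMat, Matrix.of_apply, Matrix.sub_apply, Matrix.add_apply, Matrix.smul_apply]
    simp only [smul_eq_mul] at h1 ⊢
    linarith
  have hUt : Uᵀ * tauMat G W R = (2 : ℝ) • 1 := by
    rw [htau, Matrix.mul_add, ← Matrix.mul_assoc, hUL, Matrix.mul_smul, hUU, smul_smul,
      div_mul_cancel₀ _ hn0, Matrix.zero_mul, zero_add]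
  have hmain : L * R * tauMat G W R = 0 := by
    rw [hLR, Matrix.add_mul, Matrix.sub_mul, Matrix.mul_assoc, hUt, Matrix.smul_mul,
      Matrix.smul_mul, Matrix.mul_assoc U, hUt, Matrix.one_mul, htau]
    simp only [Matrix.mul_smul, Matrix.mul_one, smul_add, smul_smul]
    rw [mul_comm (2 : ℝ) (2 / n)]
    abel
  refine ⟨hmain, ?_⟩
  obtain ⟨C, hC⟩ := oneKron_exists hker (R * tauMat G W R) (by rw [← Matrix.mul_assoc, hmain])
  rw [← hU] at hC
  have htU : (tauMat G W R)ᵀ * U = (2 : ℝ) • 1 := by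
    have := congrArg Matrix.transpose hUt
    simpa using this
  rw [Matrix.mul_assoc, hC, ← Matrix.mul_assoc _ U C, htU]
  simp [smul_smul]
end
end

section
/- Let μ_1 ≥ μ_2 ≥ ⋯ ≥ μ_{ns} be the eigenvalues of R and let λ_1 ≥ λ_2 ≥ ⋯ ≥ λ_{ns−s} > λ_{ns−s+1} = ⋯ = λ_{ns} = 0 be the eigenvalues of L. Then for every i = 1, 2, …, ns − s, μ_{s+i} ≤ −2/λ_i ≤ μ_i. -/
open Matrix Finset
open scoped Kronecker

noncomputable section

lemma key_quad {m A : Type*} [Fintype m] [Fintype A] [DecidableEq A] (R : Matrix m m ℝ)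
    (a : A → m → ℝ) (α : A → ℝ)
    (hR : ∀ i j, a i ⬝ᵥ (R *ᵥ a j) = if i = j then α j else 0) (c : A → ℝ) :
    (∑ i, c i • a i) ⬝ᵥ (R *ᵥ (∑ i, c i • a i)) = ∑ i, α i * (c i * c i) := by
  simp only [Matrix.mulVec_sum, sum_dotProduct, dotProduct_sum, smul_dotProduct,
    dotProduct_smul, Matrix.mulVec_smul, hR, smul_eq_mul]
  refine Finset.sum_congr rfl fun i _ => ?_
  simp
  ring

lemma key_le {m A B : Type*} [Fintype m] [DecidableEq m] [Fintype A] [DecidableEq A] [Fintype B]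
    [DecidableEq B] (R : Matrix m m ℝ) (a : A → m → ℝ) (b : B → m → ℝ) (α : A → ℝ) (β : B → ℝ)
    (haa : ∀ i j, a i ⬝ᵥ a j = if i = j then 1 else 0)
    (hbb : ∀ i j, b i ⬝ᵥ b j = if i = j then 1 else 0)
    (haR : ∀ i j, a i ⬝ᵥ (R *ᵥ a j) = if i = j then α j else 0)
    (hbR : ∀ i j, b i ⬝ᵥ (R *ᵥ b j) = if i = j then β j else 0)
    (x y : ℝ) (hx : ∀ i, x ≤ α i) (hy : ∀ i, β i ≤ y)
    (hcard : Fintype.card m < Fintype.card A + Fintype.card B) : x ≤ y := by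
  have indep : ∀ {C : Type _} [Fintype C] [DecidableEq C] (d : C → m → ℝ)
      (_ : ∀ i j, d i ⬝ᵥ d j = if i = j then 1 else 0), LinearIndependent ℝ d := by
    intro C _ _ d hd
    rw [Fintype.linearIndependent_iff]
    intro g hg i
    have := congrArg (fun v => d i ⬝ᵥ v) hg
    simpa [dotProduct_sum, hd] using this
  have indep' : ∀ {C : Type _} [Fintype C] [DecidableEq C] (d : C → m → ℝ)
      (_ : ∀ i j, d i ⬝ᵥ d j = if i = j then 1 else 0), LinearIndependent ℝ d := by
    intro C _ _ d hd
    rw [Fintype.linearIndependent_iff]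
    intro g hg i
    have := congrArg (fun v => d i ⬝ᵥ v) hg
    simpa [dotProduct_sum, hd] using this
  have ha := indep a haa
  have hb := indep' b hbb
  have hnd : ¬ Disjoint (Submodule.span ℝ (Set.range a)) (Submodule.span ℝ (Set.range b)) := by
    intro hd
    have := Submodule.finrank_add_finrank_le_of_disjoint hd
    rw [finrank_span_eq_card ha, finrank_span_eq_card hb, Module.finrank_fintype_fun_eq_card] at this
    omega
  rw [Submodule.disjoint_def] at hnd
  push Not at hnd
  obtain ⟨v, hva, hvb, hv⟩ := hnd
  obtain ⟨c, hc⟩ := (Submodule.mem_span_range_iff_exists_fun ℝ).1 hva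
  obtain ⟨d, hd⟩ := (Submodule.mem_span_range_iff_exists_fun ℝ).1 hvb
  have e1 := key_quad R a α haR c
  have e2 := key_quad R b β hbR d
  have e3 := key_quad 1 a 1 (by simpa using haa) c
  have e4 := key_quad 1 b 1 (by simpa using hbb) d
  rw [hc] at e1 e3
  rw [hd] at e2 e4
  simp only [Matrix.one_mulVec, Pi.one_apply, one_mul] at e3 e4
  have hpos : 0 < v ⬝ᵥ v := by
    have h0 : 0 ≤ v ⬝ᵥ v := by rw [e3]; exact Finset.sum_nonneg fun i _ => mul_self_nonneg _
    exact lt_of_le_of_ne h0 fun h => hv (dotProduct_self_eq_zero.1 h.symm)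
  have l1 : x * (v ⬝ᵥ v) ≤ v ⬝ᵥ (R *ᵥ v) := by
    rw [e1, e3, Finset.mul_sum]
    exact Finset.sum_le_sum fun i _ => mul_le_mul_of_nonneg_right (hx i) (mul_self_nonneg _)
  have l2 : v ⬝ᵥ (R *ᵥ v) ≤ y * (v ⬝ᵥ v) := by
    rw [e2, e4, Finset.mul_sum]
    exact Finset.sum_le_sum fun i _ => mul_le_mul_of_nonneg_right (hy i) (mul_self_nonneg _)
  exact le_of_mul_le_mul_right (l1.trans l2) hpos

lemma exists_equiv_of_map_eq {A B : Type*} [Fintype A] [Fintype B] (f : A → ℝ) (g : B → ℝ)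
    (h : Finset.univ.val.map f = Finset.univ.val.map g) : ∃ τ : A ≃ B, ∀ a, f a = g (τ a) := by
  classical
  have hc : ∀ c : ℝ, Nonempty ({a // f a = c} ≃ {b // g b = c}) := by
    intro c
    have := congrArg (Multiset.count c) h
    rw [Multiset.count_map, Multiset.count_map] at this
    rw [← Fintype.card_eq, Fintype.card_subtype, Fintype.card_subtype]
    simpa [Finset.card, eq_comm] using this
  have e := fun c => (hc c).some
  exact ⟨Equiv.ofFiberEquiv e, fun a => (Equiv.ofFiberEquiv_map e a).symm⟩

/-- sorted orthonormal eigenvectors -/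
lemma exists_sorted {n s : ℕ} (A : Matrix (Fin n × Fin s) (Fin n × Fin s) ℝ) (hA : A.IsHermitian)
    (μ : Fin (n * s) → ℝ)
    (h : Finset.univ.val.map μ = Finset.univ.val.map hA.eigenvalues) :
    ∃ u : Fin (n * s) → (Fin n × Fin s → ℝ),
      (∀ i j, u i ⬝ᵥ u j = if i = j then 1 else 0) ∧ ∀ j, A *ᵥ u j = μ j • u j := by
  obtain ⟨τ, hσ⟩ := exists_equiv_of_map_eq _ _ h
  refine ⟨fun i => (hA.eigenvectorBasis (τ i)).ofLp, ?_, ?_⟩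
  · intro i j
    have := orthonormal_iff_ite.1 hA.eigenvectorBasis.orthonormal (τ j) (τ i)
    simp only [EuclideanSpace.inner_eq_star_dotProduct, star_trivial] at this
    simpa [eq_comm] using this
  · intro j
    have := hA.mulVec_eigenvectorBasis (τ j)
    rw [this, hσ]

lemma resist_form {n s : ℕ} (K : Matrix (Fin n × Fin s) (Fin n × Fin s) ℝ)
    (u v : Fin n × Fin s → ℝ) (hu : ∀ a, ∑ i, u (i, a) = 0) (hv : ∀ a, ∑ i, v (i, a) = 0) :
    u ⬝ᵥ (resist K *ᵥ v) = -2 * (u ⬝ᵥ (K *ᵥ v)) := by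
  have h1 : ∑ p : Fin n × Fin s, ∑ q : Fin n × Fin s,
      u p * (K (p.1, p.2) (p.1, q.2) * v q) = 0 := by
    refine Finset.sum_eq_zero fun p _ => ?_
    rw [Fintype.sum_prod_type, Finset.sum_comm]
    refine Finset.sum_eq_zero fun b _ => ?_
    simp only [← Finset.mul_sum, hv, mul_zero]
  have h2 : ∑ p : Fin n × Fin s, ∑ q : Fin n × Fin s,
      u p * (K (q.1, p.2) (q.1, q.2) * v q) = 0 := by
    rw [Finset.sum_comm]
    refine Finset.sum_eq_zero fun q _ => ?_
    rw [Fintype.sum_prod_type, Finset.sum_comm]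
    refine Finset.sum_eq_zero fun b _ => ?_
    simp only [← Finset.sum_mul, hu, zero_mul]
  have h3 : u ⬝ᵥ (resist K *ᵥ v) =
      (∑ p : Fin n × Fin s, ∑ q : Fin n × Fin s, u p * (K (p.1, p.2) (p.1, q.2) * v q)) +
      (∑ p : Fin n × Fin s, ∑ q : Fin n × Fin s, u p * (K (q.1, p.2) (q.1, q.2) * v q)) +
      -2 * (u ⬝ᵥ (K *ᵥ v)) := by
    simp only [dotProduct, mulVec, resist, Matrix.of_apply, Finset.mul_sum,
      ← Finset.sum_add_distrib]
    refine Finset.sum_congr rfl fun p _ => Finset.sum_congr rfl fun q _ => ?_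
    ring
  rw [h3, h1, h2]; ring

/-- Interlacing: if `μ₁ ≥ ⋯ ≥ μ_{ns}` are the eigenvalues of `R` and
`λ₁ ≥ ⋯ ≥ λ_{ns-s} > λ_{ns-s+1} = ⋯ = λ_{ns} = 0` are the eigenvalues of `L`,
then `μ_{s+i} ≤ -2/λᵢ ≤ μᵢ` for `i = 1, …, ns - s` (indices here are 0-based,
so `μ i` is the `(i+1)`-st largest eigenvalue). -/
theorem resist_lap_eigenvalue_interlacing
    (n s : ℕ) (hn : 2 ≤ n) (hs : 1 ≤ s)
    (G : SimpleGraph (Fin n)) [DecidableRel G.Adj] (hconn : G.Connected)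
    (W : Fin n → Fin n → Matrix (Fin s) (Fin s) ℝ)
    (hWsymm : ∀ i j, W i j = W j i)
    (hWpd : ∀ i j, G.Adj i j → (W i j).PosDef)
    (hPSD : (lap G W).PosSemidef)
    (hrank : (lap G W).rank = n * s - s)
    (hker : ∀ v : Fin n × Fin s → ℝ,
      lap G W *ᵥ v = 0 ↔ ∃ c : Fin s → ℝ, v = oneKron n s *ᵥ c)
    (Ldag : Matrix (Fin n × Fin s) (Fin n × Fin s) ℝ)
    (hMP : IsMoorePenrose (lap G W) Ldag)
    (R : Matrix (Fin n × Fin s) (Fin n × Fin s) ℝ)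
    (hR : R = resist Ldag)
    (hRH : R.IsHermitian)
    (μ lam : Fin (n * s) → ℝ)
    (hμanti : Antitone μ) (hlamanti : Antitone lam)
    (hμeig : Finset.univ.val.map μ = Finset.univ.val.map hRH.eigenvalues)
    (hlameig : Finset.univ.val.map lam = Finset.univ.val.map hPSD.1.eigenvalues)
    (hlampos : ∀ i : Fin (n * s), (i : ℕ) < n * s - s → 0 < lam i)
    (hlamzero : ∀ i : Fin (n * s), n * s - s ≤ (i : ℕ) → lam i = 0) :
    ∀ i : Fin (n * s), ∀ _ : (i : ℕ) < n * s - s,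
      μ ⟨s + (i : ℕ), by omega⟩ ≤ -2 / lam i ∧ -2 / lam i ≤ μ i := by
  obtain ⟨u, huo, huL⟩ := exists_sorted _ hPSD.1 lam hlameig
  obtain ⟨w, hwo, hwR⟩ := exists_sorted _ hRH μ hμeig
  have hLT : (lap G W)ᵀ = lap G W := by
    have := hPSD.1.eq
    rwa [Matrix.conjTranspose_eq_transpose_of_trivial] at this
  have hsum : ∀ j, lam j ≠ 0 → ∀ a, ∑ i, u j (i, a) = 0 := by
    intro j hj a
    have h0 : lap G W *ᵥ (oneKron n s *ᵥ Pi.single a 1) = 0 := (hker _).2 ⟨_, rfl⟩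
    have h1 : (oneKron n s *ᵥ Pi.single a 1) ⬝ᵥ (lap G W *ᵥ u j) = 0 := by
      rw [dotProduct_mulVec, ← mulVec_transpose, hLT, h0, zero_dotProduct]
    rw [huL, dotProduct_smul, smul_eq_mul] at h1
    have h2 := (mul_eq_zero.1 h1).resolve_left hj
    rw [Matrix.mulVec_single_one] at h2
    simpa [dotProduct, oneKron, Fintype.sum_prod_type] using h2
  have hdag : ∀ j, lam j ≠ 0 → Ldag *ᵥ u j = (lam j)⁻¹ • u j := by
    intro j hj
    obtain ⟨m1, -, -, m4⟩ := hMP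
    have hLL : Ldag * lap G W * lap G W = lap G W := by
      have := congrArg Matrix.transpose m1
      rw [Matrix.mul_assoc, Matrix.transpose_mul, m4, hLT] at this
      exact this
    have e : u j = (lam j)⁻¹ • (lap G W *ᵥ u j) := by
      rw [huL, smul_smul, inv_mul_cancel₀ hj, one_smul]
    have e2 : Ldag *ᵥ (lap G W *ᵥ u j) = u j := by
      have : (Ldag * lap G W * lap G W) *ᵥ u j = lap G W *ᵥ u j := by rw [hLL]
      rw [← Matrix.mulVec_mulVec, huL, Matrix.mulVec_smul, ← Matrix.mulVec_mulVec] at this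
      rw [← huL] at this
      exact smul_right_injective _ hj (this.trans (huL j))
    calc Ldag *ᵥ u j = Ldag *ᵥ ((lam j)⁻¹ • (lap G W *ᵥ u j)) := by rw [← e]
      _ = _ := by rw [Matrix.mulVec_smul, e2]
  have huR : ∀ i j, lam i ≠ 0 → lam j ≠ 0 →
      u i ⬝ᵥ (R *ᵥ u j) = if i = j then -2 / lam j else 0 := by
    intro i j hi hj
    rw [hR, resist_form _ _ _ (hsum i hi) (hsum j hj), hdag j hj, dotProduct_smul, huo]
    split_ifs <;> simp [div_eq_mul_inv]
  have hwR' : ∀ i j, w i ⬝ᵥ (R *ᵥ w j) = if i = j then μ j else 0 := by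
    intro i j
    rw [hwR, dotProduct_smul, hwo]
    split_ifs <;> simp
  have hmono : ∀ i j : Fin (n * s), i ≤ j → (j : ℕ) < n * s - s → -2 / lam j ≤ -2 / lam i := by
    intro i j hij hj
    have := div_le_div_of_nonneg_left (by norm_num : (0 : ℝ) ≤ 2) (hlampos j hj) (hlamanti hij)
    rw [neg_div, neg_div]
    linarith
  intro i hi
  have hns : s ≤ n * s := Nat.le_mul_of_pos_left s (by omega)
  have cardm : Fintype.card (Fin n × Fin s) = n * s := by simp
  constructor
  · refine key_le R (fun j : Set.Iic (⟨s + i, by omega⟩ : Fin (n * s)) => w j)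
      (fun j : Set.Ico i ⟨n * s - s, by omega⟩ => u j) (fun j => μ j) (fun j => -2 / lam j)
      ?_ ?_ ?_ ?_ _ _ ?_ ?_ ?_
    · intro a b; simp [hwo, Subtype.ext_iff]
    · intro a b; simp [huo, Subtype.ext_iff]
    · intro a b; simp [hwR', Subtype.ext_iff]
    · intro a b
      rw [huR _ _ (hlampos _ a.2.2).ne' (hlampos _ b.2.2).ne']; simp [Subtype.ext_iff]
    · intro a; exact hμanti a.2
    · intro a; exact hmono _ _ a.2.1 a.2.2
    · rw [cardm]; simp; omega
  · refine key_le R (fun j : Set.Iic i => u j)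
      (fun j : Set.Ici i => w j) (fun j => -2 / lam j) (fun j => μ j)
      ?_ ?_ ?_ ?_ _ _ ?_ ?_ ?_
    · intro a b; simp [huo, Subtype.ext_iff]
    · intro a b; simp [hwo, Subtype.ext_iff]
    · intro a b
      rw [huR _ _ (hlampos _ (lt_of_le_of_lt a.2 hi)).ne' (hlampos _ (lt_of_le_of_lt b.2 hi)).ne']
      simp [Subtype.ext_iff]
    · intro a b; simp [hwR', Subtype.ext_iff]
    · intro a; exact hmono _ _ a.2 hi
    · intro a; exact hμanti a.2
    · rw [cardm]; simp; omega
end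
end

section
/- The inertia of the resistance matrix R is (s, ns − s, 0); that is, R has exactly s positive eigenvalues, exactly ns − s negative eigenvalues, and no zero eigenvalue (counted with multiplicity). -/
open Matrix Finset
open scoped Kronecker

noncomputable section

theorem aux_count {m E : Type*} [Fintype m] [AddCommGroup E] [Module ℝ E] [FiniteDimensional ℝ E]
    (lam : m → ℝ) (f : E →ₗ[ℝ] (m → ℝ))
    (h : ∀ e, e ≠ 0 → 0 < ∑ p, lam p * (f e p) ^ 2) :
    Module.finrank ℝ E ≤ (Finset.univ.filter (fun p => 0 < lam p)).card := by
  classical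
  let g : E →ₗ[ℝ] ({p // 0 < lam p} → ℝ) :=
    LinearMap.pi fun p => (LinearMap.proj p.1).comp f
  have hg : Function.Injective g := by
    rw [injective_iff_map_eq_zero]
    intro e he
    by_contra hne
    have h1 := h e hne
    have h2 : ∑ p, lam p * (f e p) ^ 2 ≤ 0 := by
      apply Finset.sum_nonpos
      intro p _
      by_cases hp : 0 < lam p
      · have : f e p = 0 := congrFun he ⟨p, hp⟩
        simp [this]
      · exact mul_nonpos_of_nonpos_of_nonneg (not_lt.mp hp) (sq_nonneg _)
    linarith
  have := LinearMap.finrank_le_finrank_of_injective hg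
  rwa [Module.finrank_fintype_fun_eq_card, Fintype.card_subtype] at this

theorem aux_spec {m : Type*} [Fintype m] [DecidableEq m] (A : Matrix m m ℝ) (hA : A.IsHermitian)
    : ∃ f : (m → ℝ) →ₗ[ℝ] (m → ℝ), ∀ x, x ⬝ᵥ (A *ᵥ x) = ∑ p, hA.eigenvalues p * (f x p) ^ 2 := by
  let V : Matrix m m ℝ := hA.eigenvectorUnitary
  have hsp : A = V * diagonal hA.eigenvalues * Vᵀ := by
    have := hA.spectral_theorem
    simpa [Unitary.conjStarAlgAut_apply, star_eq_conjTranspose, V, Function.comp_def] using this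
  refine ⟨(Vᵀ).mulVecLin, fun x => ?_⟩
  conv_lhs => rw [hsp]
  rw [← mulVec_mulVec, ← mulVec_mulVec, dotProduct_mulVec, ← mulVec_transpose]
  simp only [dotProduct, mulVec_diagonal, mulVecLin_apply]
  refine Finset.sum_congr rfl fun p _ => by ring

theorem aux_MP {m : Type*} [Fintype m] (L K : Matrix m m ℝ) (hL : L.PosSemidef)
    (h : IsMoorePenrose L K) :
    K.PosSemidef ∧ (∀ x, L *ᵥ x = 0 → K *ᵥ x = 0) ∧ (∀ x, x ⬝ᵥ (K *ᵥ x) = 0 → L *ᵥ x = 0) := by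
  obtain ⟨h1, h2, h3, h4⟩ := h
  have hLt : Lᵀ = L := by simpa using hL.1.eq
  rw [transpose_mul, hLt] at h3 h4
  have hc : L * K = K * L := by
    have e1 : L * K = L * K * (K * L) := by
      rw [← h3, Matrix.mul_assoc, ← Matrix.mul_assoc L, h1]
    have e2 : K * L = L * K * (K * L) := by
      conv_rhs => rw [← h4, ← Matrix.mul_assoc, h1]
      exact h4.symm
    rw [e1, ← e2]
  have hKt : Kᵀ = K := by
    have e : Kᵀ * L * Kᵀ = Kᵀ := by
      have := congrArg transpose h2
      rwa [transpose_mul, transpose_mul, hLt, ← Matrix.mul_assoc] at this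
    rw [← e, h3, hc, Matrix.mul_assoc, h4, ← hc, ← Matrix.mul_assoc, h2]
  have hK : K.PosSemidef := by
    have := hL.conjTranspose_mul_mul_same K
    rwa [conjTranspose_eq_transpose_of_trivial, hKt, h2] at this
  refine ⟨hK, fun x hx => ?_, fun x hx => ?_⟩
  · rw [← h2, Matrix.mul_assoc, hc, ← mulVec_mulVec, ← mulVec_mulVec, hx]; simp
  · have : K *ᵥ x = 0 := by
      apply (hK.dotProduct_mulVec_zero_iff x).1
      simpa using hx
    rw [← h1, Matrix.mul_assoc, ← hc, ← mulVec_mulVec, ← mulVec_mulVec, this]; simp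

theorem oneKron_mulVec_apply (n s : ℕ) (c : Fin s → ℝ) (i : Fin n) (a : Fin s) :
    (oneKron n s *ᵥ c) (i, a) = c a := by
  simp [oneKron, mulVec, dotProduct]

theorem oneKron_t_mulVec_apply (n s : ℕ) (x : Fin n × Fin s → ℝ) (a : Fin s) :
    ((oneKron n s)ᵀ *ᵥ x) a = ∑ i, x (i, a) := by
  simp [oneKron, mulVec, dotProduct, Fintype.sum_prod_type]

theorem quad_exp {n s : ℕ} (K : Matrix (Fin n × Fin s) (Fin n × Fin s) ℝ) (x : Fin n × Fin s → ℝ) :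
    x ⬝ᵥ (resist K *ᵥ x) =
      (∑ i, ∑ a, ∑ b, x (i, a) * K (i, a) (i, b) * ∑ j, x (j, b))
      + (∑ j, ∑ b, ∑ a, x (j, b) * K (j, a) (j, b) * ∑ i, x (i, a))
      - 2 * (x ⬝ᵥ (K *ᵥ x)) := by
  have e1 : (∑ i, ∑ a, ∑ b, x (i, a) * K (i, a) (i, b) * ∑ j, x (j, b)) =
      ∑ p : Fin n × Fin s, ∑ q : Fin n × Fin s, x p * K (p.1, p.2) (p.1, q.2) * x q := by
    simp only [Fintype.sum_prod_type, Finset.mul_sum]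
    refine Finset.sum_congr rfl fun i _ => Finset.sum_congr rfl fun a _ => ?_
    exact Finset.sum_comm
  have e2 : (∑ j, ∑ b, ∑ a, x (j, b) * K (j, a) (j, b) * ∑ i, x (i, a)) =
      ∑ p : Fin n × Fin s, ∑ q : Fin n × Fin s, x p * K (q.1, p.2) (q.1, q.2) * x q := by
    rw [Finset.sum_comm (s := (univ : Finset (Fin n × Fin s)))]
    simp only [Fintype.sum_prod_type, Finset.mul_sum]
    refine Finset.sum_congr rfl fun i _ => Finset.sum_congr rfl fun a _ => ?_
    rw [Finset.sum_comm]
    refine Finset.sum_congr rfl fun _ _ => Finset.sum_congr rfl fun _ _ => by ring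
  rw [e1, e2]
  simp only [dotProduct, mulVec, Finset.mul_sum, ← Finset.sum_add_distrib, ← Finset.sum_sub_distrib]
  refine Finset.sum_congr rfl fun _ _ => Finset.sum_congr rfl fun _ _ => ?_
  simp only [resist, of_apply]
  ring

theorem quad_single {n s : ℕ} (K : Matrix (Fin n × Fin s) (Fin n × Fin s) ℝ) (c : Fin s → ℝ)
    (i : Fin n) :
    (fun p : Fin n × Fin s => if p.1 = i then c p.2 else 0) ⬝ᵥ
      (K *ᵥ (fun p : Fin n × Fin s => if p.1 = i then c p.2 else 0)) =
      ∑ a, ∑ b, c a * K (i, a) (i, b) * c b := by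
  simp only [dotProduct, mulVec, Fintype.sum_prod_type, Finset.mul_sum]
  rw [Finset.sum_eq_single i]
  · refine Finset.sum_congr rfl fun a _ => ?_
    rw [Finset.sum_eq_single i]
    · simp [mul_assoc]
    · intro j _ hj; simp [hj]
    · simp
  · intro j _ hj; simp [hj]
  · simp

/-- The inertia of the resistance matrix `R` is `(s, ns - s, 0)`: it has exactly
`s` positive eigenvalues, `ns - s` negative eigenvalues and no zero eigenvalue,
counted with multiplicity. -/
theorem resist_inertia
    (n s : ℕ) (hn : 2 ≤ n) (hs : 1 ≤ s)
    (G : SimpleGraph (Fin n)) [DecidableRel G.Adj] (hconn : G.Connected)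
    (W : Fin n → Fin n → Matrix (Fin s) (Fin s) ℝ)
    (hWsymm : ∀ i j, W i j = W j i)
    (hWpd : ∀ i j, G.Adj i j → (W i j).PosDef)
    (hPSD : (lap G W).PosSemidef)
    (hrank : (lap G W).rank = n * s - s)
    (hker : ∀ v : Fin n × Fin s → ℝ,
      lap G W *ᵥ v = 0 ↔ ∃ c : Fin s → ℝ, v = oneKron n s *ᵥ c)
    (Ldag : Matrix (Fin n × Fin s) (Fin n × Fin s) ℝ)
    (hMP : IsMoorePenrose (lap G W) Ldag)
    (R : Matrix (Fin n × Fin s) (Fin n × Fin s) ℝ)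
    (hR : R = resist Ldag)
    (hRH : R.IsHermitian) :
    (Finset.univ.filter (fun p => 0 < hRH.eigenvalues p)).card = s ∧
      (Finset.univ.filter (fun p => hRH.eigenvalues p < 0)).card = n * s - s ∧
      (Finset.univ.filter (fun p => hRH.eigenvalues p = 0)).card = 0 := by
  obtain ⟨hK, hLK, hKL⟩ := aux_MP _ _ hPSD hMP
  obtain ⟨f, hf⟩ := aux_spec R hRH
  have hKnn : ∀ x, 0 ≤ x ⬝ᵥ (Ldag *ᵥ x) := fun x => by
    simpa using hK.dotProduct_mulVec_nonneg x
  have hpos : s ≤ (Finset.univ.filter (fun p => 0 < hRH.eigenvalues p)).card := by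
    have := aux_count hRH.eigenvalues (f.comp (oneKron n s).mulVecLin) (fun c hc => by
      rw [LinearMap.comp_apply, ← hf, hR, quad_exp, mulVecLin_apply,
        hLK _ ((hker _).2 ⟨c, rfl⟩)]
      simp only [oneKron_mulVec_apply, Finset.sum_const, dotProduct_zero, mul_zero, sub_zero,
        Finset.card_univ, Fintype.card_fin, nsmul_eq_mul]
      have e1 : ∑ i : Fin n, ∑ a, ∑ b, c a * Ldag (i, a) (i, b) * ((n : ℝ) * c b)
          = n * ∑ i : Fin n, ∑ a, ∑ b, c a * Ldag (i, a) (i, b) * c b := by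
        simp only [Finset.mul_sum]
        exact Finset.sum_congr rfl fun _ _ => Finset.sum_congr rfl fun _ _ =>
          Finset.sum_congr rfl fun _ _ => by ring
      have e2 : ∑ i : Fin n, ∑ b, ∑ a, c b * Ldag (i, a) (i, b) * ((n : ℝ) * c a)
          = n * ∑ i : Fin n, ∑ a, ∑ b, c a * Ldag (i, a) (i, b) * c b := by
        simp only [Finset.mul_sum]
        refine Finset.sum_congr rfl fun _ _ => ?_
        rw [Finset.sum_comm]
        exact Finset.sum_congr rfl fun _ _ =>
          Finset.sum_congr rfl fun _ _ => by ring
      rw [e1, e2]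
      have hn0 : (0 : ℝ) < n := by exact_mod_cast (by omega : 0 < n)
      have hS : 0 < ∑ i : Fin n, ∑ a, ∑ b, c a * Ldag (i, a) (i, b) * c b := by
        apply Finset.sum_pos
        · intro i _
          rw [← quad_single]
          refine lt_of_le_of_ne (hKnn _) fun h0 => hc ?_
          obtain ⟨c', hc'⟩ := (hker _).1 (hKL _ h0.symm)
          haveI : Nontrivial (Fin n) := Fin.nontrivial_iff_two_le.2 hn
          obtain ⟨j, hj⟩ := exists_ne i
          funext a
          have h1 := congrFun hc' (i, a)
          have h2 := congrFun hc' (j, a)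
          rw [oneKron_mulVec_apply] at h1 h2
          simp [hj] at h1 h2
          simp [h1, ← h2]
        · exact ⟨⟨0, by omega⟩, Finset.mem_univ _⟩
      positivity)
    simpa using this
  have hneg : n * s - s ≤ (Finset.univ.filter (fun p => hRH.eigenvalues p < 0)).card := by
    have hd : n * s - s ≤ Module.finrank ℝ (LinearMap.ker ((oneKron n s)ᵀ).mulVecLin) := by
      have h1 := LinearMap.finrank_range_add_finrank_ker ((oneKron n s)ᵀ).mulVecLin
      have h2 := Submodule.finrank_le (LinearMap.range ((oneKron n s)ᵀ).mulVecLin)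
      simp only [Module.finrank_fintype_fun_eq_card, Fintype.card_prod, Fintype.card_fin] at h1 h2
      omega
    have := aux_count (fun p => - hRH.eigenvalues p)
      (f.comp (LinearMap.ker ((oneKron n s)ᵀ).mulVecLin).subtype) (fun e he => by
      obtain ⟨x, hx⟩ := e
      have hx0 : x ≠ 0 := fun h => he (Subtype.ext h)
      have hsum : ∀ a, ∑ i, x (i, a) = 0 := fun a => by
        rw [← oneKron_t_mulVec_apply]
        exact congrFun (LinearMap.mem_ker.1 hx) a
      simp only [neg_mul, Finset.sum_neg_distrib, LinearMap.comp_apply, Submodule.subtype_apply]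
      rw [← hf, hR, quad_exp]
      simp only [hsum, mul_zero, Finset.sum_const_zero]
      have : 0 < x ⬝ᵥ (Ldag *ᵥ x) := by
        refine lt_of_le_of_ne (hKnn _) fun h0 => hx0 ?_
        obtain ⟨c, rfl⟩ := (hker _).1 (hKL _ h0.symm)
        have hc : c = 0 := by
          funext a
          have := hsum a
          simp only [oneKron_mulVec_apply, Finset.sum_const, Finset.card_univ, Fintype.card_fin,
            nsmul_eq_mul, mul_eq_zero, Nat.cast_eq_zero] at this
          rcases this with h | h
          · omega
          · exact h
        simp [hc]
      linarith)
    simp only [neg_pos] at this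
    exact hd.trans this
  have htot : (Finset.univ.filter (fun p => 0 < hRH.eigenvalues p)).card
      + (Finset.univ.filter (fun p => hRH.eigenvalues p < 0)).card
      + (Finset.univ.filter (fun p => hRH.eigenvalues p = 0)).card = n * s := by
    rw [← Finset.card_union_of_disjoint, ← Finset.card_union_of_disjoint]
    · rw [show n * s = (Finset.univ : Finset (Fin n × Fin s)).card by simp]
      congr 1
      ext p
      simp only [Finset.mem_union, Finset.mem_filter, Finset.mem_univ, true_and, iff_true]
      rcases lt_trichotomy (hRH.eigenvalues p) 0 with h | h | h <;> simp [h]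
    · rw [Finset.disjoint_left]
      intro p
      simp only [Finset.mem_union, Finset.mem_filter, Finset.mem_univ, true_and]
      rintro (h | h) h' <;> linarith
    · rw [Finset.disjoint_left]
      intro p
      simp only [Finset.mem_filter, Finset.mem_univ, true_and]
      intro h h'
      linarith
  have hle : s ≤ n * s := Nat.le_mul_of_pos_left s (by omega)
  omega
end
end
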